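/- arXiv:1905.12315 — 9 statements merged into one kernel-verified Lean document; each statement's English description precedes it below -/
import Mathlib

section
/- For a general source with side information, the minimum achievable coding rates coincide whether or not the encoder can access the side information: R_A = R_B, and likewise R*_A = R*_B. -/
open MeasureTheory Filter Topology
open scoped ENNReal

noncomputable section

/-- An `A`-code: the encoder has access to the side information. -/
structure ACode (X1 X2 : Type) where
  M : ℕ
  hM : 1 ≤ M
  enc : X1 × X2 → Fin M
  dec : Fin M × X2 → X1

/-- The composite map of an `A`-code. -/
def ACode.map {X1 X2 : Type} (c : ACode X1 X2) (p : X1 × X2) : X1 :=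
  c.dec (c.enc p, p.2)

/-- The set of correctly decoded pairs for an `A`-code. -/
def ACode.T {X1 X2 : Type} (c : ACode X1 X2) : Set (X1 × X2) :=
  {p | c.map p = p.1}

/-- A `B`-code: the encoder has no access to the side information. -/
structure BCode (X1 X2 : Type) where
  M : ℕ
  hM : 1 ≤ M
  enc : X1 → Fin M
  dec : Fin M × X2 → X1

/-- The composite map of a `B`-code. -/
def BCode.map {X1 X2 : Type} (c : BCode X1 X2) (p : X1 × X2) : X1 :=
  c.dec (c.enc p.1, p.2)

/-- The set of correctly decoded pairs for a `B`-code. -/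
def BCode.T {X1 X2 : Type} (c : BCode X1 X2) : Set (X1 × X2) :=
  {p | c.map p = p.1}

/-- Rate of a sequence of `A`-codes. -/
def rateA {X1 X2 : ℕ → Type} (c : ∀ n, ACode (X1 n) (X2 n)) : EReal :=
  Filter.limsup (fun n : ℕ => (((n : ℝ)⁻¹ * Real.log ((c n).M : ℝ) : ℝ) : EReal))
    Filter.atTop

/-- Rate of a sequence of `B`-codes. -/
def rateB {X1 X2 : ℕ → Type} (c : ∀ n, BCode (X1 n) (X2 n)) : EReal :=
  Filter.limsup (fun n : ℕ => (((n : ℝ)⁻¹ * Real.log ((c n).M : ℝ) : ℝ) : EReal))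
    Filter.atTop

/-- `R_A`: minimum `A`-achievable coding rate. -/
def RA {X1 X2 : ℕ → Type} [∀ n, MeasurableSpace (X1 n)] [∀ n, MeasurableSpace (X2 n)]
    (μ : ∀ n, Measure (X1 n × X2 n)) : EReal :=
  ⨅ (c : ∀ n, ACode (X1 n) (X2 n))
    (_ : Filter.Tendsto (fun n => μ n ((c n).T)ᶜ) Filter.atTop (nhds 0)), rateA c

/-- `R_B`: minimum `B`-achievable coding rate. -/
def RB {X1 X2 : ℕ → Type} [∀ n, MeasurableSpace (X1 n)] [∀ n, MeasurableSpace (X2 n)]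
    (μ : ∀ n, Measure (X1 n × X2 n)) : EReal :=
  ⨅ (c : ∀ n, BCode (X1 n) (X2 n))
    (_ : Filter.Tendsto (fun n => μ n ((c n).T)ᶜ) Filter.atTop (nhds 0)), rateB c

/-- `R*_A`: minimum `A*`-achievable coding rate. -/
def RAStar {X1 X2 : ℕ → Type} [∀ n, MeasurableSpace (X1 n)] [∀ n, MeasurableSpace (X2 n)]
    (μ : ∀ n, Measure (X1 n × X2 n)) : EReal :=
  ⨅ (c : ∀ n, ACode (X1 n) (X2 n))
    (_ : Filter.liminf (fun n => μ n ((c n).T)ᶜ) Filter.atTop < 1), rateA c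

/-- `R*_B`: minimum `B*`-achievable coding rate. -/
def RBStar {X1 X2 : ℕ → Type} [∀ n, MeasurableSpace (X1 n)] [∀ n, MeasurableSpace (X2 n)]
    (μ : ∀ n, Measure (X1 n × X2 n)) : EReal :=
  ⨅ (c : ∀ n, BCode (X1 n) (X2 n))
    (_ : Filter.liminf (fun n => μ n ((c n).T)ᶜ) Filter.atTop < 1), rateB c

section Helpers

open Classical

lemma mem_atom_iff_mem {X : Type} [MeasurableSpace X] {x x' : X} (h : x' ∈ measurableAtom x)
    (hX : Countable X) {s : Set X} (hs : MeasurableSet s) : x ∈ s ↔ x' ∈ s := by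
  have key : ∀ t : Set X, MeasurableSet t → x ∈ t → x' ∈ t := by
    intro t ht hx
    exact measurableAtom_subset ht hx h
  refine ⟨key s hs, fun h' => ?_⟩
  by_contra hc
  exact key sᶜ hs.compl hc h'

lemma atom_eq_of_mem {X : Type} [MeasurableSpace X] {x x' : X} (h : x' ∈ measurableAtom x)
    (hX : Countable X) : measurableAtom x' = measurableAtom x := by
  apply Set.Subset.antisymm
  · exact measurableAtom_subset (MeasurableSet.measurableAtom_of_countable x) h
  · have : x ∈ measurableAtom x' := by
      rw [mem_atom_iff_mem h hX (MeasurableSet.measurableAtom_of_countable x')]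
      exact mem_measurableAtom_self x'
    exact measurableAtom_subset (MeasurableSet.measurableAtom_of_countable x') this

/-- Sets that are unions of products of atoms are measurable. -/
lemma measurableSet_of_invariant {X Y : Type} [Finite X] [Finite Y] [MeasurableSpace X]
    [MeasurableSpace Y] (S : Set (X × Y))
    (h : ∀ p q : X × Y, measurableAtom q.1 = measurableAtom p.1 →
      measurableAtom q.2 = measurableAtom p.2 → p ∈ S → q ∈ S) : MeasurableSet S := by
  have : S = ⋃ p ∈ S, measurableAtom p.1 ×ˢ measurableAtom p.2 := by
    ext q
    simp only [Set.mem_iUnion, Set.mem_prod, exists_prop]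
    constructor
    · intro hq
      exact ⟨q, hq, mem_measurableAtom_self _, mem_measurableAtom_self _⟩
    · rintro ⟨p, hp, h1, h2⟩
      exact h p q (atom_eq_of_mem h1 inferInstance) (atom_eq_of_mem h2 inferInstance) hp
  rw [this]
  exact MeasurableSet.biUnion (Set.to_countable _) fun p _ =>
    (MeasurableSet.measurableAtom_of_countable _).prod
      (MeasurableSet.measurableAtom_of_countable _)

/-- The union of atom rectangles contained in `T`. -/
def innerSet {X Y : Type} [MeasurableSpace X] [MeasurableSpace Y] (T : Set (X × Y)) :
    Set (X × Y) :=
  {p | measurableAtom p.1 ×ˢ measurableAtom p.2 ⊆ T}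

lemma innerSet_compl_le {X Y : Type} [Finite X] [Finite Y] [MeasurableSpace X]
    [MeasurableSpace Y] (μ : Measure (X × Y)) (T : Set (X × Y)) :
    μ (innerSet T)ᶜ ≤ μ Tᶜ := by
  rw [← measure_toMeasurable (μ := μ) Tᶜ]
  apply measure_mono
  intro p hp
  simp only [innerSet, Set.mem_compl_iff, Set.mem_ofPred_eq, Set.not_subset] at hp
  obtain ⟨⟨x, y⟩, ⟨h1, h2⟩, hq⟩ := hp
  have hqS : (x, y) ∈ toMeasurable μ Tᶜ := subset_toMeasurable _ _ hq
  have hS : MeasurableSet (toMeasurable μ Tᶜ) := measurableSet_toMeasurable _ _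
  have e1 : MeasurableSet ((fun x' => (x', y)) ⁻¹' toMeasurable μ Tᶜ) :=
    measurable_prodMk_right hS
  have e2 : MeasurableSet ((fun y' => (p.1, y')) ⁻¹' toMeasurable μ Tᶜ) :=
    measurable_prodMk_left hS
  have f1 := (mem_atom_iff_mem h1 inferInstance e1).2 hqS
  exact (mem_atom_iff_mem h2 inferInstance e2).2 f1

/-- Collision count for random hashing. -/
lemma collision_count {α ι : Type} (L : ι → ℕ) [Fintype (α → ∀ k, Fin (L k))] (A A' : α) (hA : A ≠ A')
    (k : ι) :
    L k * (Finset.univ.filter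
      (fun h : α → ∀ k, Fin (L k) => h A' k = h A k)).card
      ≤ Fintype.card (α → ∀ k, Fin (L k)) := by
  set E := Finset.univ.filter (fun h : α → ∀ k, Fin (L k) => h A' k = h A k) with hE
  have : L k * E.card = ((Finset.univ : Finset (Fin (L k))) ×ˢ E).card := by
    rw [Finset.card_product]; simp
  rw [this, ← Finset.card_univ]
  apply Finset.card_le_card_of_injOn
    (fun q => Function.update q.2 A (Function.update (q.2 A) k q.1))
  · intro _ _; simp
  · rintro ⟨t, h⟩ hq ⟨t', h'⟩ hq' heq
    simp only [Finset.coe_product, Set.mem_prod, Finset.mem_coe, hE, Finset.mem_filter,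
      Finset.mem_univ, true_and, Finset.coe_univ, Set.mem_univ] at hq hq'
    simp only at heq
    have hat : ∀ B, B ≠ A → h B = h' B := by
      intro B hB
      have := congrFun heq B
      simpa [Function.update_of_ne hB] using this
    have h2 := congrFun heq A
    simp only [Function.update_self] at h2
    have ht : t = t' := by simpa using congrFun h2 k
    refine Prod.ext ht ?_
    funext B j
    by_cases hB : B = A
    · subst hB
      by_cases hj : j = k
      · subst hj
        change h B j = h' B j
        rw [← hq, ← hq', hat A' (Ne.symm hA)]
      · simpa [Function.update_of_ne hj] using congrFun h2 j
    · exact congrFun (hat B hB) j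

lemma exists_label {X : Type} [Finite X] (A : Set X) (N : ℕ) (hN : 0 < N) :
    ∃ l : X → Fin N, A.ncard ≤ N → Set.InjOn l A := by
  by_cases h : A.ncard ≤ N
  · haveI := Fintype.ofFinite X
    have hc : Fintype.card A ≤ Fintype.card (Fin N) := by
      rw [Fintype.card_fin, ← Nat.card_eq_fintype_card]; exact h
    obtain ⟨e⟩ := Function.Embedding.nonempty_of_card_le hc
    refine ⟨fun x => if hx : x ∈ A then e ⟨x, hx⟩ else ⟨0, hN⟩, fun _ => ?_⟩
    intro x hx y hy hxy
    simp only [hx, hy, dite_true] at hxy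
    simpa using e.injective hxy
  · exact ⟨fun _ => ⟨0, hN⟩, fun h' => absurd h' h⟩

/-- Total size of the atoms good for `y` is at most `M`. -/
lemma slice_injOn {X Y : Type} (c : ACode X Y) (y : Y) :
    Set.InjOn (fun x => c.enc (x, y)) {x | (x, y) ∈ c.T} := by
  intro x hx x' hx' h
  have h1 : c.dec (c.enc (x, y), y) = x := hx
  have h2 : c.dec (c.enc (x', y), y) = x' := hx'
  simp only at h
  rw [← h1, ← h2, h]

lemma slice_card {X Y : Type} [Fintype X] (c : ACode X Y) (y : Y) (s : Finset X)
    (hs : ∀ x ∈ s, (x, y) ∈ c.T) : s.card ≤ c.M := by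
  have := Finset.card_le_card_of_injOn (s := s) (t := (Finset.univ : Finset (Fin c.M)))
    (fun x => c.enc (x, y)) (fun _ _ => by simp) ((slice_injOn c y).mono hs)
  simpa using this

/-- Size class of a set. -/
def cls {X : Type} (m : ℕ) (A : Set X) : Fin (m + 1) :=
  ⟨min (Nat.log 2 A.ncard) m, by omega⟩

def badSet {X Y : Type} [MeasurableSpace X] [MeasurableSpace Y] (G : Set (X × Y)) (m : ℕ)
    (L : Fin (m + 1) → ℕ) (h : Set X → ∀ k, Fin (L k)) : Set (X × Y) :=
  {p | p ∈ G ∧ ∃ x', (x', p.2) ∈ G ∧ measurableAtom x' ≠ measurableAtom p.1 ∧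
    ∃ k, cls m (measurableAtom x') = k ∧ cls m (measurableAtom p.1) = k ∧
      h (measurableAtom x') k = h (measurableAtom p.1) k}

lemma badSet_measurable {X Y : Type} [Finite X] [Finite Y] [MeasurableSpace X]
    [MeasurableSpace Y] (T : Set (X × Y)) (m : ℕ)
    (L : Fin (m + 1) → ℕ) (h : Set X → ∀ k, Fin (L k)) :
    MeasurableSet (badSet (innerSet T) m L h) := by
  apply measurableSet_of_invariant
  rintro ⟨x, y⟩ ⟨x1, y1⟩ h1 h2
  simp only at h1 h2
  simp only [badSet, innerSet, Set.mem_ofPred_eq, h1, h2]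
  exact id

lemma good_count {X Y : Type} [Fintype X] [Fintype Y] [MeasurableSpace X]
    [MeasurableSpace Y] (c : ACode X Y) (m : ℕ) (y : Y) (k : Fin (m + 1))
    (𝒜 : Finset (Set X))
    (h𝒜 : ∀ A ∈ 𝒜, ∃ x', (x', y) ∈ innerSet c.T ∧ A = measurableAtom x' ∧ cls m A = k) :
    𝒜.card * 2 ^ (k : ℕ) ≤ c.M := by
  have h1 : (𝒜.biUnion (fun A => A.toFinset)).card ≤ c.M := by
    apply slice_card c y
    intro x hx
    simp only [Finset.mem_biUnion, Set.mem_toFinset] at hx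
    obtain ⟨A, hA, hxA⟩ := hx
    obtain ⟨x', hx', rfl, -⟩ := h𝒜 A hA
    exact hx' ⟨hxA, mem_measurableAtom_self _⟩
  rw [Finset.card_biUnion] at h1
  · refine le_trans ?_ h1
    rw [← smul_eq_mul]
    apply Finset.card_nsmul_le_sum
    intro A hA
    obtain ⟨x', hx', rfl, hk⟩ := h𝒜 A hA
    have hpos : (measurableAtom x').ncard ≠ 0 :=
      Set.ncard_ne_zero_of_mem (mem_measurableAtom_self x') (Set.toFinite _)
    rw [← Set.ncard_eq_toFinset_card', ← hk]
    calc 2 ^ (cls m (measurableAtom x') : ℕ) ≤ 2 ^ Nat.log 2 (measurableAtom x').ncard :=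
          Nat.pow_le_pow_right (by norm_num) (min_le_left _ _)
      _ ≤ _ := Nat.pow_log_le_self 2 hpos
  · intro A hA B hB hAB
    obtain ⟨x, -, rfl, -⟩ := h𝒜 A hA
    obtain ⟨x', -, rfl, -⟩ := h𝒜 B hB
    refine Set.disjoint_toFinset.2 (Set.disjoint_left.2 ?_)
    intro z hz hz'
    exact hAB ((atom_eq_of_mem hz inferInstance).symm.trans (atom_eq_of_mem hz' inferInstance))

lemma arith_aux {α : Type} (s : Finset α) (f : α → ℕ) (B H K Lk D : ℕ)
    (h4 : B ≤ ∑ a ∈ s, f a) (h5 : ∀ a ∈ s, Lk * f a ≤ H) (h2 : s.card ≤ D)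
    (hL : Lk = K * D) : K * B ≤ H := by
  have h6 : Lk * ∑ a ∈ s, f a ≤ D * H := by
    rw [Finset.mul_sum]
    refine (Finset.sum_le_card_nsmul _ _ _ h5).trans ?_
    rw [smul_eq_mul]
    exact Nat.mul_le_mul_right _ h2
  rcases Nat.eq_zero_or_pos D with hD | hD
  · have : s = ∅ := Finset.card_eq_zero.1 (by omega)
    subst this
    simp only [Finset.sum_empty, Nat.le_zero] at h4
    simp [h4]
  · have h7 := Nat.mul_le_mul_left Lk h4
    refine Nat.le_of_mul_le_mul_left (c := D) ?_ hD
    refine le_trans (le_of_eq ?_) (h7.trans h6)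
    rw [hL]
    ring

lemma sigma_inj_aux {ι : Type} {β γ : ι → Type} (k k' : ι) (f f' : ∀ k, β k) (g g' : ∀ k, γ k)
    (h : (⟨k, f k, g k⟩ : Σ k, β k × γ k) = ⟨k', f' k', g' k'⟩) :
    k = k' ∧ f k' = f' k' ∧ g k' = g' k' := by
  obtain rfl : k = k' := congrArg Sigma.fst h
  simpa using h

lemma bad_count {X Y : Type} [Fintype X] [Fintype Y] [MeasurableSpace X]
    [MeasurableSpace Y] (c : ACode X Y) (m K : ℕ) (L : Fin (m + 1) → ℕ)
    (hL : ∀ k, L k = K * (c.M / 2 ^ (k : ℕ))) (p : X × Y) :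
    K * (Finset.univ.filter (fun h : Set X → ∀ k : Fin (m + 1), Fin (L k) =>
      p ∈ badSet (innerSet c.T) m L h)).card
    ≤ Fintype.card (Set X → ∀ k : Fin (m + 1), Fin (L k)) := by
  obtain ⟨A, hA⟩ : ∃ A, A = measurableAtom p.1 := ⟨_, rfl⟩
  obtain ⟨k, hk⟩ : ∃ k, k = cls m A := ⟨_, rfl⟩
  obtain ⟨𝒜, h𝒜⟩ : ∃ 𝒜 : Finset (Set X), ∀ A', A' ∈ 𝒜 ↔ (A' ≠ A ∧
    ∃ x', (x', p.2) ∈ innerSet c.T ∧ A' = measurableAtom x' ∧ cls m A' = k) :=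
    ⟨Finset.univ.filter (fun A' => A' ≠ A ∧
      ∃ x', (x', p.2) ∈ innerSet c.T ∧ A' = measurableAtom x' ∧ cls m A' = k),
      fun A' => by rw [Finset.mem_filter]; simp only [Finset.mem_univ, true_and]⟩
  have h1 : 𝒜.card * 2 ^ (k : ℕ) ≤ c.M :=
    good_count c m p.2 k 𝒜 (fun A' hA' => ((h𝒜 A').1 hA').2)
  have h2 : 𝒜.card ≤ c.M / 2 ^ (k : ℕ) := (Nat.le_div_iff_mul_le (by positivity)).2 h1
  have h3 : Finset.univ.filter (fun h : Set X → ∀ k : Fin (m + 1), Fin (L k) =>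
      p ∈ badSet (innerSet c.T) m L h) ⊆ 𝒜.biUnion (fun A' => Finset.univ.filter
        (fun h : Set X → ∀ k : Fin (m + 1), Fin (L k) => h A' k = h A k)) := by
    intro h hh
    obtain ⟨-, x', a1, a2, k', a3, a5, a4⟩ := (Finset.mem_filter.1 hh).2
    rw [← hA] at a5 a4 a2
    have hkk : k' = k := by rw [hk, a5]
    subst hkk
    rw [Finset.mem_biUnion]
    exact ⟨measurableAtom x', (h𝒜 _).2 ⟨a2, x', a1, rfl, a3⟩,
      Finset.mem_filter.2 ⟨Finset.mem_univ _, a4⟩⟩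
  have h4 := (Finset.card_le_card h3).trans Finset.card_biUnion_le
  have h5 : ∀ A' ∈ 𝒜, L k * (Finset.univ.filter
        (fun h : Set X → ∀ k : Fin (m + 1), Fin (L k) => h A' k = h A k)).card ≤
        Fintype.card (Set X → ∀ k : Fin (m + 1), Fin (L k)) := fun A' hA' =>
    collision_count L A A' (Ne.symm ((h𝒜 A').1 hA').1) k
  exact arith_aux 𝒜 _ _ _ _ _ _ h4 h5 h2 (hL k)

lemma exists_hash {X Y : Type} [Fintype X] [Fintype Y] [MeasurableSpace X]
    [MeasurableSpace Y] (μ : Measure (X × Y)) [IsProbabilityMeasure μ]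
    (c : ACode X Y) (m K : ℕ) (hm : m = Nat.log 2 c.M) (hK : 0 < K) :
    ∃ h : Set X → ∀ k : Fin (m + 1), Fin (K * (c.M / 2 ^ (k : ℕ))),
      (K : ℝ≥0∞) * μ (badSet (innerSet c.T) m (fun k => K * (c.M / 2 ^ (k : ℕ))) h) ≤ 1 := by
  have hpos : ∀ k : Fin (m + 1), 0 < K * (c.M / 2 ^ (k : ℕ)) := by
    intro k
    refine Nat.mul_pos hK (Nat.div_pos ?_ (by positivity))
    have hk : (k : ℕ) ≤ Nat.log 2 c.M := by have := k.2; omega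
    exact (Nat.pow_le_pow_right (by norm_num) hk).trans
      (Nat.pow_log_le_self 2 (by have := c.hM; omega))
  set L : Fin (m + 1) → ℕ := fun k => K * (c.M / 2 ^ (k : ℕ)) with hL
  have hne : (Finset.univ : Finset (Set X → ∀ k : Fin (m + 1), Fin (L k))).Nonempty :=
    ⟨fun _ k => ⟨0, hpos k⟩, Finset.mem_univ _⟩
  have hsum : ∑ h : (Set X → ∀ k : Fin (m + 1), Fin (L k)),
      (K : ℝ≥0∞) * μ (badSet (innerSet c.T) m L h) ≤
      ∑ h : (Set X → ∀ k : Fin (m + 1), Fin (L k)), (1 : ℝ≥0∞) := by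
    have e1 : ∀ h : (Set X → ∀ k : Fin (m + 1), Fin (L k)),
        (K : ℝ≥0∞) * μ (badSet (innerSet c.T) m L h) =
        ∫⁻ p, (badSet (innerSet c.T) m L h).indicator (fun _ => (K : ℝ≥0∞)) p ∂μ := by
      intro h
      rw [lintegral_indicator_const (badSet_measurable _ _ _ _)]
    simp_rw [e1]
    rw [← lintegral_finsetSum _ (fun h _ =>
      measurable_const.indicator (badSet_measurable _ _ _ _))]
    calc _ ≤ ∫⁻ _ : X × Y, ∑ h : (Set X → ∀ k : Fin (m + 1), Fin (L k)), (1 : ℝ≥0∞) ∂μ := by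
          apply lintegral_mono
          intro p
          have := bad_count c m K L (fun _ => rfl) p
          simp only [Set.indicator_apply]
          rw [← Finset.sum_filter]
          simp only [Finset.sum_const, nsmul_eq_mul, mul_one, Finset.card_univ]
          rw [mul_comm]
          exact_mod_cast this
      _ = _ := by simp
  obtain ⟨h, -, hh⟩ := ENNReal.exists_le_of_sum_le hne hsum
  exact ⟨h, hh⟩

/-- Every `A`-code can be simulated by a slightly larger `B`-code. -/
lemma exists_BCode {X Y : Type} [Fintype X] [Nonempty X] [Fintype Y] [MeasurableSpace X]
    [MeasurableSpace Y] (μ : Measure (X × Y)) [IsProbabilityMeasure μ]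
    (c : ACode X Y) (K : ℕ) (hK : 0 < K) :
    ∃ b : BCode X Y, b.M ≤ (Nat.log 2 c.M + 1) * (2 * K * c.M) ∧
      μ b.Tᶜ ≤ μ c.Tᶜ + (K : ℝ≥0∞)⁻¹ := by
  obtain ⟨m, hm⟩ : ∃ m, m = Nat.log 2 c.M := ⟨_, rfl⟩
  obtain ⟨h, hh⟩ := exists_hash μ c m K hm hK
  set L : Fin (m + 1) → ℕ := fun k => K * (c.M / 2 ^ (k : ℕ)) with hL
  set G := innerSet c.T with hG
  have hlab := fun (A : Set X) (k : Fin (m + 1)) =>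
    exists_label A (2 ^ ((k : ℕ) + 1)) (by positivity)
  choose lab hlab using hlab
  let Msg := Σ k : Fin (m + 1), Fin (2 ^ ((k : ℕ) + 1)) × Fin (L k)
  let enc : X → Msg := fun x =>
    ⟨cls m (measurableAtom x), lab (measurableAtom x) (cls m (measurableAtom x)) x,
      h (measurableAtom x) (cls m (measurableAtom x))⟩
  let dec : Msg × Y → X := fun q =>
    if hq : ∃ x, (x, q.2) ∈ G ∧ enc x = q.1 then hq.choose else Classical.arbitrary X
  let e := Fintype.equivFin Msg
  let b : BCode X Y :=
    { M := Fintype.card Msg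
      hM := Fintype.card_pos_iff.2 ⟨enc (Classical.arbitrary X)⟩
      enc := fun x => e (enc x)
      dec := fun q => dec (e.symm q.1, q.2) }
  refine ⟨b, ?_, ?_⟩
  · change Fintype.card Msg ≤ _
    simp only [Msg, Fintype.card_sigma, Fintype.card_prod, Fintype.card_fin, hL]
    refine (Finset.sum_le_card_nsmul _ _ (2 * K * c.M) ?_).trans ?_
    · intro k _
      have := Nat.mul_div_le c.M (2 ^ (k : ℕ))
      calc 2 ^ ((k : ℕ) + 1) * (K * (c.M / 2 ^ (k : ℕ)))
          = 2 * K * (2 ^ (k : ℕ) * (c.M / 2 ^ (k : ℕ))) := by ring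
        _ ≤ _ := Nat.mul_le_mul_left _ this
    · simp [hm]
  · have hsub : b.Tᶜ ⊆ Gᶜ ∪ badSet G m L h := by
      intro p hp
      by_contra hcon
      simp only [Set.mem_union, Set.mem_compl_iff, not_or, not_not] at hcon
      obtain ⟨hpG, hpb⟩ := hcon
      apply hp
      change dec (e.symm (e (enc p.1)), p.2) = p.1
      rw [Equiv.symm_apply_apply]
      have hex : ∃ x, (x, p.2) ∈ G ∧ enc x = enc p.1 := ⟨p.1, hpG, rfl⟩
      have hd : dec (enc p.1, p.2) = hex.choose := dif_pos hex
      rw [hd]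
      obtain ⟨hxG, hxe⟩ := hex.choose_spec
      set x := hex.choose
      obtain ⟨hc, hc2, hc3⟩ := sigma_inj_aux (cls m (measurableAtom x)) (cls m (measurableAtom p.1))
        (fun k => lab (measurableAtom x) k x) (fun k => lab (measurableAtom p.1) k p.1)
        (h (measurableAtom x)) (h (measurableAtom p.1)) hxe
      by_cases hat : measurableAtom x = measurableAtom p.1
      · rw [hat] at hc2
        refine hlab _ _ ?_ ?_ (mem_measurableAtom_self p.1) hc2
        · have hcard : (measurableAtom p.1).ncard ≤ c.M := by
            rw [Set.ncard_eq_toFinset_card']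
            apply slice_card c p.2
            intro z hz
            exact hpG ⟨Set.mem_toFinset.1 hz, mem_measurableAtom_self _⟩
          have hlog : Nat.log 2 (measurableAtom p.1).ncard ≤ m := by
            rw [hm]; exact Nat.log_mono_right hcard
          simp only [cls, min_eq_left hlog]
          exact (Nat.lt_pow_succ_log_self (by norm_num) _).le
        · rw [← hat]; exact mem_measurableAtom_self _
      · exact absurd ⟨hpG, x, hxG, hat, _, hc, rfl, hc3⟩ hpb
    calc μ b.Tᶜ ≤ μ (Gᶜ ∪ badSet G m L h) := measure_mono hsub
      _ ≤ μ Gᶜ + μ (badSet G m L h) := measure_union_le _ _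
      _ ≤ _ := by
        refine add_le_add (innerSet_compl_le μ c.T) ?_
        · rw [ENNReal.le_inv_iff_mul_le, mul_comm]; exact hh

/-- Any `B`-code is an `A`-code. -/
def BCode.toA {X Y : Type} (b : BCode X Y) : ACode X Y :=
  ⟨b.M, b.hM, fun p => b.enc p.1, b.dec⟩

lemma delta_tendsto (C : ℝ) :
    Tendsto (fun n : ℕ => (n : ℝ)⁻¹ * (C + 2 * Real.log ((n : ℝ) + 1))) atTop (𝓝 0) := by
  have h1 : Tendsto (fun n : ℕ => (n : ℝ)⁻¹) atTop (𝓝 0) := tendsto_inv_atTop_nhds_zero_nat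
  have h2 : Tendsto (fun x : ℝ => Real.log (x + 1) / x) atTop (𝓝 0) := by
    have h3 : (fun x : ℝ => Real.log (x + 1)) =o[atTop] (fun x : ℝ => x) := by
      have a := Real.isLittleO_log_id_atTop.comp_tendsto
        (tendsto_atTop_add_const_right atTop (1 : ℝ) tendsto_id)
      refine a.trans_isBigO ?_
      refine Asymptotics.IsBigO.of_bound 2 ?_
      filter_upwards [eventually_ge_atTop (1 : ℝ)] with x hx
      simp only [Function.comp, id, Real.norm_eq_abs]
      rw [abs_of_nonneg (by linarith), abs_of_nonneg (by linarith)]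
      linarith
    exact h3.tendsto_div_nhds_zero
  have h4 := h2.comp (tendsto_natCast_atTop_atTop (R := ℝ))
  have h5 := (h1.mul_const C).add (h4.const_mul 2)
  simp only [zero_mul, mul_zero, add_zero] at h5
  refine h5.congr fun n => ?_
  simp only [Function.comp]
  ring

lemma rate_le {X1 X2 : ℕ → Type} (c : ∀ n, ACode (X1 n) (X2 n)) (b : ∀ n, BCode (X1 n) (X2 n))
    (hb : ∀ n, (b n).M ≤ (Nat.log 2 (c n).M + 1) * (2 * (n + 1) * (c n).M)) :
    rateB b ≤ rateA c := by
  refine EReal.le_of_forall_lt_iff_le.1 ?_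
  intro r hr
  have hev : ∀ᶠ n : ℕ in atTop,
      (((n : ℝ)⁻¹ * Real.log ((c n).M : ℝ) : ℝ) : EReal) < (r : EReal) :=
    eventually_lt_of_limsup_lt hr
  set C : ℝ := Real.log ((2 * |r| + 1) * 2) with hC
  have hlim : Tendsto (fun n : ℕ =>
      ((r + (n : ℝ)⁻¹ * (C + 2 * Real.log ((n : ℝ) + 1)) : ℝ) : EReal)) atTop (𝓝 (r : EReal)) := by
    have := (delta_tendsto C).const_add r
    rw [add_zero] at this
    exact (continuous_coe_real_ereal.tendsto r).comp this
  rw [← hlim.limsup_eq]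
  refine limsup_le_limsup ?_
  · filter_upwards [hev, eventually_ge_atTop 1] with n hn hn1
    rw [EReal.coe_lt_coe_iff] at hn
    rw [EReal.coe_le_coe_iff]
    have hn0 : (0 : ℝ) < n := by exact_mod_cast hn1
    have hM : (1 : ℝ) ≤ (c n).M := by exact_mod_cast (c n).hM
    have hbM : (1 : ℝ) ≤ (b n).M := by exact_mod_cast (b n).hM
    have hlogM : Real.log (c n).M ≤ |r| * n := by
      have : Real.log (c n).M < r * n := by
        rw [inv_mul_lt_iff₀ hn0] at hn; linarith
      have h2 : r * n ≤ |r| * n := mul_le_mul_of_nonneg_right (le_abs_self r) hn0.le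
      linarith
    have hnatlog : (Nat.log 2 (c n).M : ℝ) ≤ 2 * |r| * n := by
      have h1 : ((2 : ℝ) ^ Nat.log 2 (c n).M) ≤ (c n).M := by
        exact_mod_cast Nat.pow_log_le_self 2 (by have := (c n).hM; omega)
      have h2 := Real.log_le_log (by positivity) h1
      rw [Real.log_pow] at h2
      have h3 := Real.log_two_gt_d9
      have h4 : (0 : ℝ) ≤ Nat.log 2 (c n).M := Nat.cast_nonneg _
      nlinarith
    have hbb : ((b n).M : ℝ) ≤ (((2 * |r| + 1) * 2) * ((n : ℝ) + 1) ^ 2) * (c n).M := by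
      have h1 : ((b n).M : ℝ) ≤ ((Nat.log 2 (c n).M : ℝ) + 1) * (2 * (n + 1) * (c n).M) := by
        exact_mod_cast hb n
      have hr0 := abs_nonneg r
      have h2 : (Nat.log 2 (c n).M : ℝ) + 1 ≤ (2 * |r| + 1) * (n + 1) := by nlinarith
      calc _ ≤ _ := h1
        _ ≤ ((2 * |r| + 1) * (n + 1)) * (2 * (n + 1) * (c n).M) := by gcongr
        _ = _ := by ring
    have hr0 := abs_nonneg r
    have hl := Real.log_le_log (by linarith) hbb
    rw [Real.log_mul (by positivity) (by positivity),
      Real.log_mul (by positivity) (by positivity), Real.log_pow, ← hC] at hl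
    calc (n : ℝ)⁻¹ * Real.log (b n).M
        ≤ (n : ℝ)⁻¹ * (C + (2 : ℕ) * Real.log (n + 1) + Real.log (c n).M) := by gcongr
      _ = (n : ℝ)⁻¹ * Real.log (c n).M + (n : ℝ)⁻¹ * (C + 2 * Real.log (n + 1)) := by
        push_cast; ring
      _ ≤ _ := by linarith

end Helpers


theorem statement0
    (X1 X2 : ℕ → Type)
    [∀ n, Fintype (X1 n)] [∀ n, Nonempty (X1 n)]
    [∀ n, Fintype (X2 n)] [∀ n, Nonempty (X2 n)]
    [∀ n, MeasurableSpace (X1 n)] [∀ n, MeasurableSpace (X2 n)]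
    (μ : ∀ n, Measure (X1 n × X2 n)) (hμ : ∀ n, IsProbabilityMeasure (μ n))
 :
    RA μ = RB μ ∧ RAStar μ = RBStar μ := by
  have hex : ∀ c : (∀ n, ACode (X1 n) (X2 n)), ∃ b : (∀ n, BCode (X1 n) (X2 n)),
      rateB b ≤ rateA c ∧
      ∀ n, μ n ((b n).T)ᶜ ≤ μ n ((c n).T)ᶜ + ((n + 1 : ℕ) : ℝ≥0∞)⁻¹ := by
    intro c
    choose b hb hb' using fun n => exists_BCode (μ n) (c n) (n + 1) (Nat.succ_pos n)
    exact ⟨b, rate_le c b hb, hb'⟩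
  have hinv : Tendsto (fun n : ℕ => ((n + 1 : ℕ) : ℝ≥0∞)⁻¹) atTop (𝓝 0) :=
    ENNReal.tendsto_inv_nat_nhds_zero.comp (tendsto_add_atTop_nat 1)
  refine ⟨le_antisymm ?_ ?_, le_antisymm ?_ ?_⟩
  · refine le_iInf₂ fun b hb => ?_
    exact iInf₂_le (fun n => (b n).toA) hb
  · refine le_iInf₂ fun c hc => ?_
    obtain ⟨b, hr, hb⟩ := hex c
    refine (iInf₂_le b ?_).trans hr
    have h := hc.add hinv
    rw [add_zero] at h
    exact tendsto_of_tendsto_of_tendsto_of_le_of_le tendsto_const_nhds h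
      (fun _ => zero_le) hb
  · refine le_iInf₂ fun b hb => ?_
    exact iInf₂_le (fun n => (b n).toA) hb
  · refine le_iInf₂ fun c hc => ?_
    obtain ⟨b, hr, hb⟩ := hex c
    refine (iInf₂_le b ?_).trans hr
    obtain ⟨s, hs1, hs2⟩ := exists_between hc
    obtain ⟨t, ht1, ht2⟩ := exists_between hs2
    have hfreq : ∃ᶠ n in atTop, μ n ((c n).T)ᶜ < s := frequently_lt_of_liminf_lt (by isBoundedDefault) hs1
    have hpos : (0 : ℝ≥0∞) < t - s := tsub_pos_of_lt ht1
    have hev := hinv.eventually (gt_mem_nhds hpos)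
    refine lt_of_le_of_lt (liminf_le_of_frequently_le ?_ (by isBoundedDefault)) ht2
    refine (hfreq.and_eventually hev).mono ?_
    rintro n ⟨h1, h2⟩
    calc μ n ((b n).T)ᶜ ≤ _ := hb n
      _ ≤ s + (t - s) := add_le_add h1.le h2.le
      _ = t := add_tsub_cancel_of_le ht1.le

end
end

section
/- Let s, R > 0 be arbitrary. Then for any sequence (k_n) of nonnegative integers with k_n ≤ n^s for all n, the optimal asymptotic error probability of A_n-codes at rate R equals that of k_n+1 B_n-codes at rate R: ε_A(R) = ε_B(R; (k_n)). -/
open MeasureTheory Filter Topology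
open scoped ENNReal

noncomputable section

/-- Rate of a multi-sequence of `B`-codes: `limsup (1/n) log (max_i M_{i,n})`. -/
def rateBMulti {X1 X2 : ℕ → Type} (k : ℕ → ℕ)
    (c : ∀ n, Fin (k n + 1) → BCode (X1 n) (X2 n)) : EReal :=
  Filter.limsup
    (fun n : ℕ => (((n : ℝ)⁻¹ * Real.log (⨆ i, ((c n i).M : ℝ)) : ℝ) : EReal))
    Filter.atTop

/-- `ε_A(R)`. -/
def epsA {X1 X2 : ℕ → Type} [∀ n, MeasurableSpace (X1 n)] [∀ n, MeasurableSpace (X2 n)]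
    (μ : ∀ n, Measure (X1 n × X2 n)) (R : ℝ) : ℝ≥0∞ :=
  ⨅ (c : ∀ n, ACode (X1 n) (X2 n)) (_ : rateA c ≤ (R : EReal)),
    Filter.limsup (fun n => μ n ((c n).T)ᶜ) Filter.atTop

/-- `ε_B(R;(k_n))`. -/
def epsBMulti {X1 X2 : ℕ → Type} [∀ n, MeasurableSpace (X1 n)] [∀ n, MeasurableSpace (X2 n)]
    (k : ℕ → ℕ) (μ : ∀ n, Measure (X1 n × X2 n)) (R : ℝ) : ℝ≥0∞ :=
  ⨅ (c : ∀ n, Fin (k n + 1) → BCode (X1 n) (X2 n)) (_ : rateBMulti k c ≤ (R : EReal)),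
    Filter.limsup (fun n => μ n (⋂ i, ((c n i).T)ᶜ)) Filter.atTop

lemma coloring_aux {Q : Type} [DecidableEq Q] (cls : Q → ℕ) (b : ℕ → ℕ)
    (w : Q → Q → ℝ≥0∞) (S : Finset Q) (hb : ∀ q ∈ S, 0 < b (cls q)) :
    ∃ h : Q → ℕ, (∀ q ∈ S, h q < b (cls q)) ∧
      ∑ q ∈ S, ∑ q' ∈ S, (if q ≠ q' ∧ cls q = cls q' ∧ h q = h q' then w q q' else 0) ≤
      ∑ q ∈ S, ∑ q' ∈ S, (if q ≠ q' ∧ cls q = cls q' then w q q' / (b (cls q) : ℝ≥0∞) else 0) := by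
  induction S using Finset.induction_on with
  | empty => exact ⟨fun _ => 0, by simp, by simp⟩
  | insert a S ha ih =>
    obtain ⟨h, hh, hsum⟩ := ih (fun q hq => hb q (Finset.mem_insert_of_mem hq))
    have hba : 0 < b (cls a) := hb a (Finset.mem_insert_self _ _)
    let g : ℕ → ℝ≥0∞ := fun c =>
      ∑ q ∈ S, (if cls a = cls q ∧ c = h q then w a q + w q a else 0)
    obtain ⟨c, hc, hmin⟩ := Finset.exists_min_image (Finset.range (b (cls a))) g
      ⟨0, Finset.mem_range.2 hba⟩
    have h1 : (b (cls a) : ℝ≥0∞) * g c ≤ ∑ q ∈ S, (if cls a = cls q then w a q + w q a else 0) := by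
      calc (b (cls a) : ℝ≥0∞) * g c = (Finset.range (b (cls a))).card • g c := by simp
        _ ≤ ∑ c ∈ Finset.range (b (cls a)), g c :=
            Finset.card_nsmul_le_sum _ _ _ (fun x hx => hmin x hx)
        _ = ∑ q ∈ S, ∑ c ∈ Finset.range (b (cls a)),
              (if cls a = cls q ∧ c = h q then w a q + w q a else 0) := Finset.sum_comm
        _ ≤ _ := by
            refine Finset.sum_le_sum fun q hq => ?_
            by_cases hcl : cls a = cls q
            · simp only [hcl, true_and, if_true]
              rw [Finset.sum_ite_eq']
              split_ifs <;> simp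
            · simp [hcl]
    have hb0 : (b (cls a) : ℝ≥0∞) ≠ 0 := by exact_mod_cast hba.ne'
    have h2 : g c ≤ ∑ q ∈ S, (if cls a = cls q then (w a q + w q a) / (b (cls a) : ℝ≥0∞) else 0) := by
      have : g c ≤ (∑ q ∈ S, (if cls a = cls q then w a q + w q a else 0)) / (b (cls a) : ℝ≥0∞) := by
        rw [ENNReal.le_div_iff_mul_le (Or.inl hb0) (Or.inl (ENNReal.natCast_ne_top _)), mul_comm]
        exact h1
      refine this.trans (le_of_eq ?_)
      rw [div_eq_mul_inv, Finset.sum_mul]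
      refine Finset.sum_congr rfl fun q _ => ?_
      split_ifs <;> simp [div_eq_mul_inv]
    have hne : ∀ q ∈ S, q ≠ a := fun q hq e => ha (e ▸ hq)
    refine ⟨Function.update h a c, ?_, ?_⟩
    · intro q hq
      rcases Finset.mem_insert.1 hq with rfl | hq
      · simpa using hc
      · rw [Function.update_of_ne (hne q hq)]; exact hh q hq
    · rw [Finset.sum_insert ha, Finset.sum_insert ha, Finset.sum_insert ha, Finset.sum_insert ha]
      simp only [ne_eq, not_true_eq_false, false_and, if_false, zero_add]
      have e1 : ∀ F : Q → Q → ℝ≥0∞, ∑ q ∈ S, ∑ q' ∈ insert a S, F q q'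
          = ∑ q ∈ S, F q a + ∑ q ∈ S, ∑ q' ∈ S, F q q' := by
        intro F
        rw [← Finset.sum_add_distrib]
        exact Finset.sum_congr rfl fun q _ => Finset.sum_insert ha
      rw [e1, e1, ← add_assoc, ← add_assoc]
      refine add_le_add ?_ ?_
      · rw [← Finset.sum_add_distrib, ← Finset.sum_add_distrib]
        refine le_trans (le_of_eq ?_) (h2.trans (le_of_eq ?_))
        · refine Finset.sum_congr rfl fun q hq => ?_
          have := hne q hq
          rw [Function.update_self, Function.update_of_ne this]
          by_cases hcl : cls a = cls q
          · by_cases hcc : c = h q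
            · simp [hcl, hcc, this, this.symm]
            · simp [hcl, hcc, this, this.symm, Ne.symm hcc]
          · simp [hcl, Ne.symm hcl]
        · refine Finset.sum_congr rfl fun q hq => ?_
          have := hne q hq
          by_cases hcl : cls a = cls q
          · simp [hcl, this, this.symm, ENNReal.add_div]
          · simp [hcl, Ne.symm hcl]
      · refine le_trans (le_of_eq ?_) hsum
        refine Finset.sum_congr rfl fun q hq => Finset.sum_congr rfl fun q' hq' => ?_
        rw [Function.update_of_ne (hne q hq), Function.update_of_ne (hne q' hq')]

lemma mult_aux {Z ι : Type} [MeasurableSpace Z] (μ : Measure Z) (S : Finset ι)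
    (A : ι → Set Z) (B : Set Z) (m : ℕ) (hA : ∀ i ∈ S, MeasurableSet (A i))
    (hB : MeasurableSet B) (hAB : ∀ i ∈ S, A i ⊆ B)
    (hm : ∀ z ∈ B, ∀ U ⊆ S, (∀ i ∈ U, z ∈ A i) → U.card ≤ m) :
    ∑ i ∈ S, μ (A i) ≤ m * μ B := by
  classical
  calc ∑ i ∈ S, μ (A i) = ∑ i ∈ S, ∫⁻ z, (A i).indicator 1 z ∂μ :=
        Finset.sum_congr rfl fun i hi => (lintegral_indicator_one (hA i hi)).symm
    _ = ∫⁻ z, ∑ i ∈ S, (A i).indicator 1 z ∂μ :=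
        (lintegral_finsetSum' _ fun i hi => (measurable_one.indicator (hA i hi)).aemeasurable).symm
    _ ≤ ∫⁻ z, m * B.indicator 1 z ∂μ := by
        refine lintegral_mono fun z => ?_
        by_cases hz : z ∈ B
        · have : ∑ i ∈ S, (A i).indicator (1 : Z → ℝ≥0∞) z = ((S.filter (fun i => z ∈ A i)).card : ℝ≥0∞) := by
            rw [Finset.card_filter]
            push_cast
            exact Finset.sum_congr rfl fun i _ => by simp [Set.indicator_apply]
          simp only [this]
          have := hm z hz (S.filter (fun i => z ∈ A i)) (Finset.filter_subset _ _) (by simp)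
          simp [hz]
          exact_mod_cast this
        · have : ∑ i ∈ S, (A i).indicator (1 : Z → ℝ≥0∞) z = 0 :=
            Finset.sum_eq_zero fun i hi => by
              exact Set.indicator_of_notMem (fun h => hz (hAB i hi h)) _
          simp only [this]; simp
    _ = m * μ B := by
        rw [lintegral_const_mul _ (measurable_one.indicator hB), lintegral_indicator_one hB]

lemma exists_rep (X : Type) [Fintype X] [MeasurableSpace X] :
    ∃ ρ : X → X, (∀ x, ρ (ρ x) = ρ x) ∧ (∀ q, MeasurableSet (ρ ⁻¹' {q})) ∧
      ∀ s : Set X, MeasurableSet s → ∀ x, (x ∈ s ↔ ρ x ∈ s) := by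
  let st : Setoid X :=
    { r := fun x y => ∀ s : Set X, MeasurableSet s → (x ∈ s ↔ y ∈ s)
      iseqv := ⟨fun _ _ _ => Iff.rfl, fun h s hs => (h s hs).symm,
        fun h h' s hs => (h s hs).trans (h' s hs)⟩ }
  let ρ : X → X := fun x => (Quotient.mk st x).out
  have h1 : ∀ x, st.r (ρ x) x := fun x => Quotient.exact (Quotient.out_eq (Quotient.mk st x))
  have h2 : ∀ x y, st.r x y → ρ x = ρ y := fun x y h => by
    have : Quotient.mk st x = Quotient.mk st y := Quotient.sound h
    simp only [ρ, this]
  refine ⟨ρ, fun x => h2 _ _ (h1 x), ?_, fun s hs x => (h1 x s hs).symm⟩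
  intro q
  have key : ∀ x, ρ ⁻¹' {ρ x} = measurableAtom x := by
    intro x
    ext y
    simp only [Set.mem_preimage, Set.mem_singleton_iff, measurableAtom, Set.mem_iInter]
    constructor
    · intro h s hxs hs
      exact (h1 y s hs).1 (h ▸ (h1 x s hs).2 hxs)
    · intro h
      refine h2 _ _ fun s hs => ⟨fun hy => ?_, fun hx => h s hx hs⟩
      by_contra hx
      exact h sᶜ hx hs.compl hy
  by_cases hq : ∃ x, ρ x = q
  · obtain ⟨x, rfl⟩ := hq
    rw [key]
    exact MeasurableSet.measurableAtom_of_countable x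
  · have : ρ ⁻¹' {q} = ∅ := by
      ext y; simp; exact fun h => hq ⟨y, h⟩
    rw [this]; exact MeasurableSet.empty

lemma exists_idx {X : Type} [Fintype X] [DecidableEq X] (ρ : X → X) :
    ∃ idx : X → ℕ, (∀ x, idx x < (Finset.univ.filter (fun z => ρ z = ρ x)).card) ∧
      ∀ x y, ρ x = ρ y → idx x = idx y → x = y := by
  refine ⟨fun x => ((Finset.univ.filter (fun z => ρ z = ρ x)).equivFin ⟨x, by simp⟩ : ℕ),
    fun x => Fin.is_lt _, ?_⟩
  intro x y h
  have : ∀ (F F' : Finset X) (hF : F = F') (hx : x ∈ F) (hy : y ∈ F'),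
      ((F.equivFin ⟨x, hx⟩ : Fin _) : ℕ) = (F'.equivFin ⟨y, hy⟩ : Fin _) → x = y := by
    rintro F _ rfl hx hy he
    have := F.equivFin.injective (Fin.ext he)
    exact congrArg Subtype.val this
  exact this _ _ (by rw [h]) _ _

lemma key_aux {X Y : Type} [Fintype X] [Nonempty X] [MeasurableSpace X] [MeasurableSpace Y]
    (μ : Measure (X × Y)) [IsProbabilityMeasure μ] (c : ACode X Y) (K : ℕ) (hK : 1 ≤ K) :
    ∃ d : BCode X Y, d.M = (Nat.log 2 c.M + 1) * (2 * K * c.M) ∧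
      μ (d.T)ᶜ ≤ μ (c.T)ᶜ + (K : ℝ≥0∞)⁻¹ := by
  classical
  obtain ⟨ρ, hρρ, hρm, hρs⟩ := exists_rep X
  obtain ⟨idx, hidx, hinj⟩ := exists_idx ρ
  set M := c.M with hM
  have hM1 : 1 ≤ M := c.hM
  let G : Set (X × Y) := (toMeasurable μ (c.T)ᶜ)ᶜ
  have hGm : MeasurableSet G := (measurableSet_toMeasurable _ _).compl
  have hGT : G ⊆ c.T := by
    rw [Set.compl_subset_comm]; exact subset_toMeasurable _ _
  have hGμ : μ Gᶜ = μ (c.T)ᶜ := by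
    simp only [G, compl_compl]; exact measure_toMeasurable _
  have hGρ : ∀ x y, (x, y) ∈ G ↔ (ρ x, y) ∈ G := fun x y =>
    hρs {x | (x, y) ∈ G} (measurable_prodMk_right hGm) x
  have hGcard : ∀ (y : Y) (U : Finset X), (∀ x ∈ U, (x, y) ∈ G) → U.card ≤ M := by
    intro y U hU
    have := Finset.card_le_card_of_injOn (s := U) (t := (Finset.univ : Finset (Fin c.M)))
      (fun x => c.enc (x, y)) (by simp) (by
        intro x hx x' hx' he
        have h1 : c.dec (c.enc (x, y), y) = x := hGT (hU x hx)
        have h2 : c.dec (c.enc (x', y), y) = x' := hGT (hU x' hx')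
        simp only at he
        rw [← h1, ← h2, he])
    simpa using this
  let fib : X → Finset X := fun q => Finset.univ.filter (fun z => ρ z = q)
  let cls : X → ℕ := fun q => Nat.log 2 (fib q).card
  let b : ℕ → ℕ := fun j => K * (M / 2 ^ j)
  let S : Finset X := (Finset.univ.image ρ).filter (fun q => (fib q).card ≤ M)
  have hSρ : ∀ q ∈ S, ρ q = q := by
    intro q hq
    obtain ⟨x, -, rfl⟩ := Finset.mem_image.1 (Finset.mem_filter.1 hq).1
    exact hρρ x
  have hfibpos : ∀ q, ρ q = q → 0 < (fib q).card := fun q hq =>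
    Finset.card_pos.2 ⟨q, by simp [fib, hq]⟩
  have hcls : ∀ q, ρ q = q → 2 ^ cls q ≤ (fib q).card := fun q hq =>
    Nat.pow_log_le_self 2 (hfibpos q hq).ne'
  have hdivpos : ∀ q ∈ S, 0 < M / 2 ^ cls q := fun q hq =>
    Nat.div_pos ((hcls q (hSρ q hq)).trans (Finset.mem_filter.1 hq).2) (by positivity)
  let w : X → X → ℝ≥0∞ := fun q q' => μ ((ρ ⁻¹' {q}) ×ˢ {y | (q, y) ∈ G ∧ (q', y) ∈ G})
  obtain ⟨h, hh, hsum⟩ := coloring_aux cls b w S (fun q hq => Nat.mul_pos hK (hdivpos q hq))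
  -- mass bound
  have hK0 : (K : ℝ≥0∞) ≠ 0 := by exact_mod_cast (by omega : K ≠ 0)
  have hrow : ∀ q ∈ S, ∑ q' ∈ S, (if q ≠ q' ∧ cls q = cls q' then w q q' / (b (cls q) : ℝ≥0∞) else 0)
      ≤ μ ((ρ ⁻¹' {q}) ×ˢ Set.univ) / (K : ℝ≥0∞) := by
    intro q hq
    have hm : ∑ q' ∈ S.filter (fun q' => cls q = cls q'), w q q' ≤
        ((M / 2 ^ cls q : ℕ) : ℝ≥0∞) * μ ((ρ ⁻¹' {q}) ×ˢ Set.univ) := by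
      apply mult_aux
      · intro q' _
        exact (hρm q).prod ((measurable_prodMk_left hGm).inter (measurable_prodMk_left hGm))
      · exact (hρm q).prod MeasurableSet.univ
      · intro q' _
        exact Set.prod_mono_right (Set.subset_univ _)
      · rintro ⟨x, y⟩ - U hUS hU
        rw [Nat.le_div_iff_mul_le (by positivity)]
        have hU1 : ∀ q' ∈ U, q' ∈ S ∧ cls q = cls q' := fun q' h' => Finset.mem_filter.1 (hUS h')
        calc U.card * 2 ^ cls q ≤ ∑ q' ∈ U, (fib q').card := by
              rw [← smul_eq_mul]
              refine Finset.card_nsmul_le_sum _ _ _ fun q' hq' => ?_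
              rw [(hU1 q' hq').2]
              exact hcls q' (hSρ q' (hU1 q' hq').1)
          _ = (U.biUnion fib).card := by
              rw [Finset.card_biUnion]
              intro i _ j _ hij
              rw [Function.onFun, Finset.disjoint_left]
              intro z hz hz'
              simp only [fib, Finset.mem_filter, Finset.mem_univ, true_and] at hz hz'
              exact hij (hz.symm.trans hz')
          _ ≤ M := by
              refine hGcard y _ fun z hz => ?_
              obtain ⟨q', hq', hz⟩ := Finset.mem_biUnion.1 hz
              have hz : ρ z = q' := by simpa [fib] using hz
              rw [hGρ, hz]
              exact (hU q' hq').2.2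
    have hd0 : ((M / 2 ^ cls q : ℕ) : ℝ≥0∞) ≠ 0 := by exact_mod_cast (hdivpos q hq).ne'
    calc _ ≤ ∑ q' ∈ S, (if cls q = cls q' then w q q' / (b (cls q) : ℝ≥0∞) else 0) := by
          refine Finset.sum_le_sum fun q' _ => ?_
          by_cases h1 : cls q = cls q' <;> by_cases h2 : q = q' <;> simp [h1, h2]
      _ = (∑ q' ∈ S.filter (fun q' => cls q = cls q'), w q q') / (b (cls q) : ℝ≥0∞) := by
          rw [← Finset.sum_filter, div_eq_mul_inv, Finset.sum_mul]
          rfl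
      _ ≤ (((M / 2 ^ cls q : ℕ) : ℝ≥0∞) * μ ((ρ ⁻¹' {q}) ×ˢ Set.univ)) / (b (cls q) : ℝ≥0∞) :=
          ENNReal.div_le_div_right hm _
      _ = _ := by
          have : (b (cls q) : ℝ≥0∞) = ((M / 2 ^ cls q : ℕ) : ℝ≥0∞) * K := by
            simp only [b]; push_cast; ring
          rw [this]
          exact ENNReal.mul_div_mul_left _ _ hd0 (ENNReal.natCast_ne_top _)
  have htot : ∑ q ∈ S, ∑ q' ∈ S, (if q ≠ q' ∧ cls q = cls q' ∧ h q = h q' then w q q' else 0)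
      ≤ (K : ℝ≥0∞)⁻¹ := by
    refine hsum.trans ((Finset.sum_le_sum hrow).trans ?_)
    have : ∑ q ∈ S, μ ((ρ ⁻¹' {q}) ×ˢ Set.univ) ≤ ((1 : ℕ) : ℝ≥0∞) * μ Set.univ := by
      apply mult_aux
      · exact fun q _ => (hρm q).prod MeasurableSet.univ
      · exact MeasurableSet.univ
      · exact fun _ _ => Set.subset_univ _
      · rintro ⟨x, y⟩ - U - hU
        rw [Finset.card_le_one]
        intro i hi j hj
        exact (hU i hi).1.symm.trans (hU j hj).1
    simp only [div_eq_mul_inv]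
    rw [← Finset.sum_mul]
    calc _ ≤ ((1 : ℕ) : ℝ≥0∞) * μ Set.univ * (K : ℝ≥0∞)⁻¹ := by gcongr
      _ = _ := by simp
  let Bad : Set (X × Y) := ⋃ q ∈ S, ⋃ q' ∈ S, if q ≠ q' ∧ cls q = cls q' ∧ h q = h q' then
    (ρ ⁻¹' {q}) ×ˢ {y | (q, y) ∈ G ∧ (q', y) ∈ G} else ∅
  have hBad : μ Bad ≤ (K : ℝ≥0∞)⁻¹ := by
    refine le_trans ?_ htot
    refine (measure_biUnion_finset_le _ _).trans (Finset.sum_le_sum fun q _ => ?_)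
    refine (measure_biUnion_finset_le _ _).trans (Finset.sum_le_sum fun q' _ => ?_)
    split_ifs
    · exact le_rfl
    · simp
  have hGS : ∀ x y, (x, y) ∈ G → ρ x ∈ S := by
    intro x y hxy
    refine Finset.mem_filter.2 ⟨Finset.mem_image_of_mem _ (Finset.mem_univ _), hGcard y _ ?_⟩
    intro z hz
    have hz : ρ z = ρ x := by simpa [fib] using hz
    rw [hGρ, hz, ← hGρ]; exact hxy
  let N := (Nat.log 2 M + 1) * (2 * K * M)
  have hL : 0 < 2 * K * M := by positivity
  have hN : 0 < N := Nat.mul_pos (Nat.succ_pos _) hL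
  let v : X → ℕ := fun x => h (ρ x) * 2 ^ (cls (ρ x) + 1) + idx x
  let e : X → ℕ := fun x => cls (ρ x) * (2 * K * M) + v x
  have hidx2 : ∀ x, idx x < 2 ^ (cls (ρ x) + 1) := fun x =>
    (hidx x).trans (Nat.lt_pow_succ_log_self (by norm_num) _)
  have hv : ∀ x, ρ x ∈ S → v x < 2 * K * M := by
    intro x hx
    have h1 := hh _ hx
    have h2 := hidx2 x
    have h3 : M / 2 ^ cls (ρ x) * 2 ^ cls (ρ x) ≤ M := Nat.div_mul_le_self _ _
    calc v x < (h (ρ x) + 1) * 2 ^ (cls (ρ x) + 1) := by simp only [v]; rw [add_mul]; omega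
      _ ≤ (K * (M / 2 ^ cls (ρ x))) * 2 ^ (cls (ρ x) + 1) := Nat.mul_le_mul_right _ h1
      _ = 2 * K * (M / 2 ^ cls (ρ x) * 2 ^ cls (ρ x)) := by ring
      _ ≤ _ := Nat.mul_le_mul_left _ h3
  have he : ∀ x, ρ x ∈ S → e x < N := by
    intro x hx
    have h1 := hv x hx
    have h2 : cls (ρ x) ≤ Nat.log 2 M := Nat.log_mono_right (Finset.mem_filter.1 hx).2
    calc e x < (cls (ρ x) + 1) * (2 * K * M) := by simp only [e]; rw [add_mul]; omega
      _ ≤ N := Nat.mul_le_mul_right _ (by omega)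
  let enc : X → Fin N := fun x => ⟨e x % N, Nat.mod_lt _ hN⟩
  have huniq : ∀ x x' y, (x, y) ∈ G → (x', y) ∈ G → (x, y) ∉ Bad → enc x = enc x' → x = x' := by
    intro x x' y hx hx' hb hee
    have hS := hGS x y hx
    have hS' := hGS x' y hx'
    have h1 : e x = e x' := by
      have := congrArg Fin.val hee
      simpa only [enc, Nat.mod_eq_of_lt (he x hS), Nat.mod_eq_of_lt (he x' hS')] using this
    have hdm : ∀ a a' d r r' : ℕ, r < d → r' < d → a * d + r = a' * d + r' → a = a' ∧ r = r' := by
      intro a a' d r r' hr hr' hE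
      have hd : 0 < d := by omega
      have q1 : (a * d + r) / d = a := by
        rw [mul_comm, Nat.mul_add_div hd, Nat.div_eq_of_lt hr, add_zero]
      have q2 : (a' * d + r') / d = a' := by
        rw [mul_comm, Nat.mul_add_div hd, Nat.div_eq_of_lt hr', add_zero]
      have : a = a' := by rw [← q1, ← q2, hE]
      subst this
      exact ⟨rfl, by omega⟩
    obtain ⟨h2, h3⟩ := hdm _ _ _ _ _ (hv x hS) (hv x' hS') h1
    have hi' := hidx2 x'
    simp only [v] at h3
    rw [← h2] at h3 hi'
    obtain ⟨h4, h5⟩ := hdm _ _ _ _ _ (hidx2 x) hi' h3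
    have h6 : ρ x = ρ x' := by
      by_contra hne
      apply hb
      simp only [Bad, Set.mem_iUnion]
      refine ⟨ρ x, hS, ρ x', hS', ?_⟩
      rw [if_pos ⟨hne, h2, h4⟩]
      exact ⟨rfl, (hGρ _ _).1 hx, (hGρ _ _).1 hx'⟩
    exact hinj _ _ h6 h5
  let dec : Fin N × Y → X := fun p =>
    if hp : ∃ x, (x, p.2) ∈ G ∧ (x, p.2) ∉ Bad ∧ enc x = p.1 then hp.choose
    else Classical.arbitrary X
  refine ⟨⟨N, hN, enc, dec⟩, rfl, ?_⟩
  have hsub : (BCode.T ⟨N, hN, enc, dec⟩)ᶜ ⊆ Gᶜ ∪ Bad := by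
    rintro ⟨x, y⟩ hxy
    by_contra hcon
    rw [Set.mem_union, not_or, Set.mem_compl_iff, not_not] at hcon
    apply hxy
    have hp : ∃ x', (x', y) ∈ G ∧ (x', y) ∉ Bad ∧ enc x' = enc x := ⟨x, hcon.1, hcon.2, rfl⟩
    change dec (enc x, y) = x
    have : dec (enc x, y) = hp.choose := dif_pos hp
    rw [this]
    obtain ⟨p1, p2, p3⟩ := hp.choose_spec
    exact huniq _ _ _ p1 hcon.1 p2 p3
  calc _ ≤ μ (Gᶜ ∪ Bad) := measure_mono hsub
    _ ≤ μ Gᶜ + μ Bad := measure_union_le _ _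
    _ ≤ _ := by rw [hGμ]; gcongr

lemma conv_aux {X Y : Type} [Nonempty X] (k : ℕ) (c : Fin (k + 1) → BCode X Y) :
    ∃ d : ACode X Y, d.M = ∑ i, (c i).M ∧ (d.T)ᶜ ⊆ ⋂ i, ((c i).T)ᶜ := by
  classical
  let enc : X × Y → Fin (∑ i, (c i).M) := fun p =>
    if hp : ∃ i, p ∈ (c i).T then finSigmaFinEquiv ⟨hp.choose, (c hp.choose).enc p.1⟩
    else finSigmaFinEquiv ⟨0, (c 0).enc p.1⟩
  let dec : Fin (∑ i, (c i).M) × Y → X := fun p =>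
    (c (finSigmaFinEquiv.symm p.1).1).dec ((finSigmaFinEquiv.symm p.1).2, p.2)
  have hM : 1 ≤ ∑ i, (c i).M :=
    (c 0).hM.trans (Finset.single_le_sum (f := fun i => (c i).M) (fun _ _ => Nat.zero_le _)
      (Finset.mem_univ 0))
  refine ⟨⟨_, hM, enc, dec⟩, rfl, ?_⟩
  intro p hp
  rw [Set.mem_iInter]
  intro i hi
  apply hp
  have hex : ∃ i, p ∈ (c i).T := ⟨i, hi⟩
  change dec (enc p, p.2) = p.1
  have : enc p = finSigmaFinEquiv ⟨hex.choose, (c hex.choose).enc p.1⟩ := dif_pos hex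
  have h2 : ∀ a : (i : Fin (k + 1)) × Fin (c i).M,
      dec (finSigmaFinEquiv a, p.2) = (c a.1).dec (a.2, p.2) := by
    intro a
    have := finSigmaFinEquiv.symm_apply_apply a
    change (c (finSigmaFinEquiv.symm (finSigmaFinEquiv a)).1).dec
      ((finSigmaFinEquiv.symm (finSigmaFinEquiv a)).2, p.2) = _
    rw [this]
  rw [this, h2]
  exact hex.choose_spec

lemma rate_aux (u v : ℕ → ℝ) (R : EReal) (C p : ℝ) (hC : 0 < C) (hu : ∀ n, 1 ≤ u n)
    (hv : ∀ n, 1 ≤ v n) (huv : ∀ᶠ n : ℕ in atTop, v n ≤ C * (n : ℝ) ^ p * u n)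
    (hR : limsup (fun n : ℕ => (((n : ℝ)⁻¹ * Real.log (u n) : ℝ) : EReal)) atTop ≤ R) :
    limsup (fun n : ℕ => (((n : ℝ)⁻¹ * Real.log (v n) : ℝ) : EReal)) atTop ≤ R := by
  let z : ℕ → ℝ := fun n => (n : ℝ)⁻¹ * Real.log C + p * (Real.log n / n)
  have hz : Tendsto z atTop (𝓝 0) := by
    have h1 : Tendsto (fun n : ℕ => (n : ℝ)⁻¹ * Real.log C) atTop (𝓝 (0 * Real.log C)) :=
      tendsto_inv_atTop_nhds_zero_nat.mul_const _
    have h2 : Tendsto (fun x : ℝ => Real.log x / x) atTop (𝓝 0) :=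
      Real.isLittleO_log_id_atTop.tendsto_div_nhds_zero
    have h3 := (h2.comp tendsto_natCast_atTop_atTop).const_mul p
    simpa [z, Function.comp_def] using h1.add h3
  have hz' : limsup (fun n => ((z n : ℝ) : EReal)) atTop = 0 :=
    ((continuous_coe_real_ereal.tendsto 0).comp hz).limsup_eq
  calc _ ≤ limsup ((fun n => ((z n : ℝ) : EReal)) +
        (fun n : ℕ => (((n : ℝ)⁻¹ * Real.log (u n) : ℝ) : EReal))) atTop := by
        refine limsup_le_limsup ?_
        filter_upwards [huv, eventually_gt_atTop 0] with n hn hn0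
        have hn0 : (0 : ℝ) < n := by exact_mod_cast hn0
        simp only [Pi.add_apply]
        rw [← EReal.coe_add, EReal.coe_le_coe_iff]
        have h0 := Real.log_le_log (by linarith [hv n]) hn
        rw [Real.log_mul (by positivity) (by linarith [hu n]),
          Real.log_mul hC.ne' (by positivity), Real.log_rpow hn0] at h0
        have := mul_le_mul_of_nonneg_left h0 (inv_nonneg.2 hn0.le)
        refine this.trans (le_of_eq ?_)
        simp only [z]; ring
    _ ≤ _ := EReal.limsup_add_le (by left; rw [hz']; simp) (by left; rw [hz']; simp)
    _ ≤ R := by rw [hz', zero_add]; exact hR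

theorem statement1
    (X1 X2 : ℕ → Type)
    [∀ n, Fintype (X1 n)] [∀ n, Nonempty (X1 n)]
    [∀ n, Fintype (X2 n)] [∀ n, Nonempty (X2 n)]
    [∀ n, MeasurableSpace (X1 n)] [∀ n, MeasurableSpace (X2 n)]
    (μ : ∀ n, Measure (X1 n × X2 n)) (hμ : ∀ n, IsProbabilityMeasure (μ n))
    (R s : ℝ) (hR : 0 < R) (hs : 0 < s)
    (k : ℕ → ℕ) (hk : ∀ n : ℕ, (k n : ℝ) ≤ (n : ℝ) ^ s) :
    epsA μ R = epsBMulti k μ R := by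
  classical
  apply le_antisymm
  · refine le_iInf₂ fun c hc => ?_
    choose d hdM hdT using fun n => conv_aux (k n) (c n)
    refine iInf₂_le_of_le d ?_ (limsup_le_limsup (Eventually.of_forall fun n =>
      measure_mono (hdT n)))
    have hbdd : ∀ n, BddAbove (Set.range fun i => ((c n i).M : ℝ)) := fun n =>
      (Set.finite_range _).bddAbove
    refine rate_aux (fun n => ⨆ i, ((c n i).M : ℝ)) _ _ 2 s two_pos ?_ ?_ ?_ hc
    · intro n
      exact le_ciSup_of_le (hbdd n) 0 (by exact_mod_cast (c n 0).hM)
    · intro n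
      exact_mod_cast (d n).hM
    · filter_upwards [eventually_gt_atTop 0] with n hn
      have h1 : (1 : ℝ) ≤ (n : ℝ) ^ s := Real.one_le_rpow (by exact_mod_cast hn) hs.le
      have h2 : ((d n).M : ℝ) ≤ ((k n : ℝ) + 1) * ⨆ i, ((c n i).M : ℝ) := by
        rw [hdM n]
        push_cast
        have := Finset.sum_le_card_nsmul Finset.univ (fun i => ((c n i).M : ℝ))
          (⨆ i, ((c n i).M : ℝ)) (fun i _ => le_ciSup (hbdd n) i)
        simpa using this
      refine h2.trans (mul_le_mul_of_nonneg_right (by linarith [hk n]) ?_)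
      exact Real.iSup_nonneg fun i => Nat.cast_nonneg _
  · refine le_iInf₂ fun c hc => ?_
    have := hμ
    choose d hdM hdT using fun n => key_aux (μ n) (c n) (n + 1) (by omega)
    refine iInf₂_le_of_le (fun n _ => d n) ?_ ?_
    · unfold rateBMulti
      simp only [ciSup_const]
      have hlt : ∀ᶠ n : ℕ in atTop, (((n : ℝ)⁻¹ * Real.log ((c n).M : ℝ) : ℝ) : EReal)
          < ((R + 1 : ℝ) : EReal) :=
        eventually_lt_of_limsup_lt (lt_of_le_of_lt hc (by exact_mod_cast lt_add_one R))
      refine rate_aux (fun n => ((c n).M : ℝ)) _ _ ((2 * (R + 1) + 1) * 4) 2 (by positivity)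
        (fun n => by exact_mod_cast (c n).hM) (fun n => by exact_mod_cast (d n).hM) ?_ hc
      filter_upwards [hlt, eventually_gt_atTop 0] with n hn hn0
      have hn1 : (1 : ℝ) ≤ n := by exact_mod_cast hn0
      rw [EReal.coe_lt_coe_iff, inv_mul_lt_iff₀ (by linarith)] at hn
      have hl : (Nat.log 2 (c n).M : ℝ) ≤ 2 * (n * (R + 1)) := by
        have h1 : (2 : ℝ) ^ (Nat.log 2 (c n).M) ≤ (c n).M := by
          exact_mod_cast Nat.pow_log_le_self 2 (by have := (c n).hM; omega)
        have h2 := Real.log_le_log (by positivity) h1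
        rw [Real.log_pow] at h2
        have h3 := Real.log_two_gt_d9
        have h4 : (0 : ℝ) ≤ (Nat.log 2 (c n).M : ℝ) := Nat.cast_nonneg _
        nlinarith
      rw [hdM n]
      push_cast
      have hM0 : (0 : ℝ) ≤ ((c n).M : ℝ) := Nat.cast_nonneg _
      have e2 : (n : ℝ) ^ (2 : ℝ) = n * n := by
        rw [show (2 : ℝ) = ((2 : ℕ) : ℝ) by norm_num, Real.rpow_natCast]; ring
      rw [e2, ← mul_assoc]
      refine mul_le_mul_of_nonneg_right ?_ hM0
      calc ((Nat.log 2 (c n).M : ℝ) + 1) * (2 * ((n : ℝ) + 1))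
          ≤ ((2 * (R + 1) + 1) * n) * (4 * n) := by
            apply mul_le_mul
            · nlinarith
            · linarith
            · positivity
            · positivity
        _ = _ := by ring
    · have hz : Tendsto (fun n : ℕ => ((n + 1 : ℕ) : ℝ≥0∞)⁻¹) atTop (𝓝 0) :=
        ENNReal.tendsto_inv_nat_nhds_zero.comp (tendsto_add_atTop_nat 1)
      refine le_trans ?_ (le_of_eq (ENNReal.limsup_add_of_right_tendsto_zero hz _))
      exact limsup_le_limsup (Eventually.of_forall fun n =>
        (measure_mono (Set.iInter_subset _ 0)).trans (hdT n))

end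
end

section
/- Let s > 1 and set k_n = ⌊n^s⌋. If R > 0 is a continuity point of the function R ↦ ρ_A(R) (with values in [0,+∞]), then the optimal error exponent of A_n-codes at rate R equals that of k_n+1 B_n-codes at rate R: ρ_A(R) = ρ_B(R; (k_n)). -/
open MeasureTheory Filter Topology
open scoped ENNReal

noncomputable section

/-- `ρ_A(R)`: optimal error exponent of `A`-codes at rate `R`. -/
def rhoA {X1 X2 : ℕ → Type} [∀ n, MeasurableSpace (X1 n)] [∀ n, MeasurableSpace (X2 n)]
    (μ : ∀ n, Measure (X1 n × X2 n)) (R : ℝ) : EReal :=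
  ⨆ (c : ∀ n, ACode (X1 n) (X2 n)) (_ : rateA c ≤ (R : EReal)),
    Filter.liminf
      (fun n : ℕ => (((n : ℝ)⁻¹ : ℝ) : EReal) * ENNReal.log (μ n ((c n).T)ᶜ)⁻¹)
      Filter.atTop

/-- `ρ_B(R;(k_n))`: optimal error exponent of `k_n+1` `B`-codes at rate `R`. -/
def rhoBMulti {X1 X2 : ℕ → Type} [∀ n, MeasurableSpace (X1 n)] [∀ n, MeasurableSpace (X2 n)]
    (k : ℕ → ℕ) (μ : ∀ n, Measure (X1 n × X2 n)) (R : ℝ) : EReal :=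
  ⨆ (c : ∀ n, Fin (k n + 1) → BCode (X1 n) (X2 n)) (_ : rateBMulti k c ≤ (R : EReal)),
    Filter.liminf
      (fun n : ℕ => (((n : ℝ)⁻¹ : ℝ) : EReal) * ENNReal.log (μ n (⋂ i, ((c n i).T)ᶜ))⁻¹)
      Filter.atTop

open Classical in
lemma aux_count1 {X : Type} [Fintype X] (m : ℕ) (a b : X) (hab : a ≠ b) :
    (Finset.univ.filter (fun f : X → Fin m => f a = f b)).card * m
      ≤ Fintype.card (X → Fin m) := by
  have h : ((Finset.univ.filter (fun f : X → Fin m => f a = f b)) ×ˢ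
      (Finset.univ : Finset (Fin m))).card ≤ (Finset.univ : Finset (X → Fin m)).card := by
    apply Finset.card_le_card_of_injOn (fun p => Function.update p.1 a p.2)
    · intro p _
      simp
    · rintro ⟨f, i⟩ hf ⟨g, j⟩ hg h
      simp only [Finset.coe_product, Set.mem_prod, Finset.mem_coe, Finset.mem_filter,
        Finset.mem_univ, true_and, and_true] at hf hg
      simp only at h
      have h1 : i = j := by simpa using congrFun h a
      have h2 : f = g := by
        funext x
        have hb : f b = g b := by simpa [Function.update_of_ne hab.symm] using congrFun h b
        by_cases hx : x = a
        · subst hx; rw [hf, hg, hb]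
        · simpa [Function.update_of_ne hx] using congrFun h x
      rw [h1, h2]
  simpa [Finset.card_product] using h

/-- `x` collides under `f` with another element of `S`. -/
def auxBad {X : Type} {m : ℕ} (S : Set X) (x : X) (f : X → Fin m) : Prop :=
  ∃ x' ∈ S, x' ≠ x ∧ f x' = f x

open Classical in
lemma aux_count2 {X : Type} [Fintype X] (m M : ℕ) (S : Finset X) (hS : S.card ≤ M) (x : X) :
    (Finset.univ.filter (fun f : X → Fin m => auxBad (S : Set X) x f)).card * m
      ≤ M * Fintype.card (X → Fin m) := by
  have h : (Finset.univ.filter (fun f : X → Fin m => auxBad (S : Set X) x f)) ⊆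
      (S.erase x).biUnion (fun x' => Finset.univ.filter (fun f : X → Fin m => f x' = f x)) := by
    intro f hf
    simp only [Finset.mem_filter, Finset.mem_univ, true_and] at hf
    obtain ⟨x', h1, h2, h3⟩ := hf
    simp only [Finset.mem_biUnion, Finset.mem_filter, Finset.mem_univ, true_and, Finset.mem_erase]
    exact ⟨x', ⟨h2, by simpa using h1⟩, h3⟩
  calc _ ≤ (∑ x' ∈ S.erase x, (Finset.univ.filter (fun f : X → Fin m => f x' = f x)).card) * m :=
        Nat.mul_le_mul_right _ ((Finset.card_le_card h).trans Finset.card_biUnion_le)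
    _ = ∑ x' ∈ S.erase x, (Finset.univ.filter (fun f : X → Fin m => f x' = f x)).card * m := by
        rw [Finset.sum_mul]
    _ ≤ ∑ x' ∈ S.erase x, Fintype.card (X → Fin m) := by
        apply Finset.sum_le_sum
        intro x' hx'
        exact aux_count1 m x' x (Finset.ne_of_mem_erase hx')
    _ = (S.erase x).card * Fintype.card (X → Fin m) := by simp
    _ ≤ _ := Nat.mul_le_mul_right _ ((Finset.card_le_card (Finset.erase_subset _ _)).trans hS)

open Classical in
lemma aux_count3 {X : Type} [Fintype X] (m M K : ℕ) (S : Finset X) (hS : S.card ≤ M) (x : X) :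
    (Finset.univ.filter (fun F : Fin K → X → Fin m => ∀ i, auxBad (S : Set X) x (F i))).card * m ^ K
      ≤ M ^ K * Fintype.card (Fin K → X → Fin m) := by
  have h : (Finset.univ.filter (fun F : Fin K → X → Fin m => ∀ i, auxBad (S : Set X) x (F i)))
      = Fintype.piFinset (fun _ : Fin K =>
        (Finset.univ.filter (fun f : X → Fin m => auxBad (S : Set X) x f))) := by
    ext F
    simp [Fintype.mem_piFinset]
  rw [h, Fintype.card_piFinset_const, ← mul_pow, Fintype.card_fun (α := Fin K), Fintype.card_fin,
    ← mul_pow]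
  exact Nat.pow_le_pow_left (aux_count2 m M S hS x) K

open Classical in
lemma aux_count4 {X : Type} [Fintype X] (m M K : ℕ) (S : Finset X) (hS : S.card ≤ M)
    (A : Set X) (hA : A ⊆ S) :
    (Finset.univ.filter (fun F : Fin K → X → Fin m =>
        ∃ x ∈ A, ∀ i, auxBad (S : Set X) x (F i))).card * m ^ K
      ≤ M ^ (K + 1) * Fintype.card (Fin K → X → Fin m) := by
  have h : (Finset.univ.filter (fun F : Fin K → X → Fin m =>
        ∃ x ∈ A, ∀ i, auxBad (S : Set X) x (F i))) ⊆
      S.biUnion (fun x => Finset.univ.filter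
        (fun F : Fin K → X → Fin m => ∀ i, auxBad (S : Set X) x (F i))) := by
    intro f hf
    simp only [Finset.mem_filter, Finset.mem_univ, true_and] at hf
    obtain ⟨x', h1, h2⟩ := hf
    simp only [Finset.mem_biUnion, Finset.mem_filter, Finset.mem_univ, true_and]
    exact ⟨x', by simpa using hA h1, h2⟩
  calc _ ≤ (∑ x ∈ S, (Finset.univ.filter
        (fun F : Fin K → X → Fin m => ∀ i, auxBad (S : Set X) x (F i))).card) * m ^ K :=
        Nat.mul_le_mul_right _ ((Finset.card_le_card h).trans Finset.card_biUnion_le)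
    _ = ∑ x ∈ S, (Finset.univ.filter
        (fun F : Fin K → X → Fin m => ∀ i, auxBad (S : Set X) x (F i))).card * m ^ K := by
        rw [Finset.sum_mul]
    _ ≤ ∑ x ∈ S, M ^ K * Fintype.card (Fin K → X → Fin m) := by
        apply Finset.sum_le_sum
        intro x' hx'
        exact aux_count3 m M K S hS x'
    _ = S.card * (M ^ K * Fintype.card (Fin K → X → Fin m)) := by simp
    _ ≤ M * (M ^ K * Fintype.card (Fin K → X → Fin m)) := Nat.mul_le_mul_right _ hS
    _ = _ := by ring

open Classical in
lemma aux_average {Ω Z : Type} [Fintype Ω] [Nonempty Ω] [MeasurableSpace Z]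
    (μ : Measure Z) [IsProbabilityMeasure μ] (E : Ω → Set Z) (hE : ∀ ω, MeasurableSet (E ω))
    (d b : ℕ)
    (h : ∀ z, (Finset.univ.filter (fun ω => z ∈ E ω)).card * d ≤ b * Fintype.card Ω) :
    ∃ ω, μ (E ω) * d ≤ b := by
  by_contra hcon
  push Not at hcon
  have h1 : (∑ ω, μ (E ω)) * d ≤ b * Fintype.card Ω := by
    have h2 : ∑ ω, μ (E ω) = ∫⁻ z, ((Finset.univ.filter (fun ω => z ∈ E ω)).card : ℝ≥0∞) ∂μ := by
      have : ∀ z, ((Finset.univ.filter (fun ω => z ∈ E ω)).card : ℝ≥0∞)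
          = ∑ ω, (E ω).indicator (fun _ => (1 : ℝ≥0∞)) z := by
        intro z
        simp [Set.indicator_apply]
      simp_rw [this]
      rw [lintegral_finsetSum]
      · simp [lintegral_indicator_const (hE _)]
      · intro ω _
        exact measurable_const.indicator (hE ω)
    rw [h2, ← lintegral_mul_const' _ _ (by simp)]
    calc _ ≤ ∫⁻ z, (b * Fintype.card Ω : ℝ≥0∞) ∂μ := by
          apply lintegral_mono
          intro z
          have hz := h z
          beta_reduce
          exact_mod_cast hz
      _ = _ := by simp
  have h3 : (b * Fintype.card Ω : ℝ≥0∞) < (∑ ω, μ (E ω)) * d := by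
    rw [Finset.sum_mul]
    have : (b * Fintype.card Ω : ℝ≥0∞) = ∑ ω : Ω, (b : ℝ≥0∞) := by simp [mul_comm]
    rw [this]
    exact ENNReal.sum_lt_sum_of_nonempty Finset.univ_nonempty (fun ω _ => hcon ω)
  exact absurd h1 (not_le.mpr h3)

lemma aux_atom_symm {X : Type} [MeasurableSpace X] {x y : X} (h : y ∈ measurableAtom x)
    {s : Set X} (hs : MeasurableSet s) : y ∈ s ↔ x ∈ s := by
  constructor
  · intro hy
    by_contra hx
    exact mem_of_mem_measurableAtom h hs.compl hx hy
  · exact fun hx => mem_of_mem_measurableAtom h hs hx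

/-- The B-code attached to a binning `f` and a set `G` of pairs. -/
def auxB {X1 X2 : Type} [Nonempty X1] (G : Set (X1 × X2)) (m : ℕ) (hm : 1 ≤ m)
    (f : X1 → Fin m) : BCode X1 X2 where
  M := m
  hM := hm
  enc := f
  dec := fun p => Classical.epsilon (fun x => (x, p.2) ∈ G ∧ f x = p.1)

lemma aux_auxB {X1 X2 : Type} [Nonempty X1] (G : Set (X1 × X2)) (m : ℕ) (hm : 1 ≤ m)
    (f : X1 → Fin m) (p : X1 × X2) (hp : p ∈ G) (hb : ¬ auxBad {x | (x, p.2) ∈ G} p.1 f) :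
    p ∈ (auxB G m hm f).T := by
  have hex : ∃ x, (x, p.2) ∈ G ∧ f x = f p.1 := ⟨p.1, hp, rfl⟩
  have h := Classical.epsilon_spec hex
  by_contra hne
  exact hb ⟨_, h.1, hne, h.2⟩

lemma aux_random {X1 X2 : Type} [Fintype X1] [Nonempty X1] [Fintype X2] [Nonempty X2]
    [MeasurableSpace X1] [MeasurableSpace X2] (μ : Measure (X1 × X2)) [IsProbabilityMeasure μ]
    (c : ACode X1 X2) (m : ℕ) (hm : 1 ≤ m) (K : ℕ) :
    ∃ b : Fin K → BCode X1 X2, (∀ i, (b i).M = m) ∧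
      ∃ e : ℝ≥0∞, e * (m ^ K : ℕ) ≤ (c.M ^ (K + 1) : ℕ) ∧
      μ (⋂ i, ((b i).T)ᶜ) ≤ μ (c.T)ᶜ + e := by
  classical
  set H := toMeasurable μ (c.T)ᶜ with hH
  set G := Hᶜ with hG
  have hGm : MeasurableSet G := (measurableSet_toMeasurable _ _).compl
  have hGT : G ⊆ c.T := by
    rw [hG, Set.compl_subset_comm]
    exact subset_toMeasurable _ _
  have hsec : ∀ y, MeasurableSet {x | (x, y) ∈ G} := fun y =>
    measurable_prodMk_right hGm
  have hsec' : ∀ x, MeasurableSet {y | (x, y) ∈ G} := fun x =>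
    measurable_prodMk_left hGm
  have hcard : ∀ y, (Finset.univ.filter (fun x => (x, y) ∈ G)).card ≤ c.M := by
    intro y
    have := Finset.card_le_card_of_injOn (s := Finset.univ.filter (fun x => (x, y) ∈ G))
      (t := (Finset.univ : Finset (Fin c.M))) (fun x => c.enc (x, y)) (by intro x _; simp) (by
        intro x hx x' hx' h
        simp only [Finset.coe_filter, Finset.mem_univ, true_and, Set.mem_ofPred_eq] at hx hx'
        have h1 : c.dec (c.enc (x, y), y) = x := hGT hx
        have h2 : c.dec (c.enc (x', y), y) = x' := hGT hx'
        simp only at h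
        rw [← h1, ← h2, h])
    simpa using this
  let E : (Fin K → X1 → Fin m) → Set (X1 × X2) := fun F =>
    {p | p ∈ G ∧ ∃ x ∈ measurableAtom p.1, ∀ i, auxBad {x | (x, p.2) ∈ G} x (F i)}
  have hE : ∀ F, MeasurableSet (E F) := by
    intro F
    have : E F = ⋃ p ∈ E F, measurableAtom p.1 ×ˢ measurableAtom p.2 := by
      apply Set.Subset.antisymm
      · intro p hp
        simp only [Set.mem_iUnion]
        exact ⟨p, hp, mem_measurableAtom_self _, mem_measurableAtom_self _⟩
      · intro q hq
        simp only [Set.mem_iUnion] at hq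
        obtain ⟨p, ⟨hpG, x, hx, hbad⟩, hq1, hq2⟩ := hq
        have hS : {x | (x, q.2) ∈ G} = {x | (x, p.2) ∈ G} := by
          ext z
          exact aux_atom_symm hq2 (hsec' z)
        have h1 : q ∈ G := by
          have : q.1 ∈ {x | (x, q.2) ∈ G} := by
            rw [hS]
            exact (aux_atom_symm hq1 (hsec p.2)).2 hpG
          exact this
        refine ⟨h1, x, ?_, ?_⟩
        · have hm1 : MeasurableSet (measurableAtom q.1) :=
            MeasurableSet.measurableAtom_of_countable _
          have hp1 : p.1 ∈ measurableAtom q.1 :=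
            (aux_atom_symm hq1 hm1).1 (mem_measurableAtom_self _)
          exact (aux_atom_symm hx hm1).2 hp1
        · rw [hS]; exact hbad
    rw [this]
    exact MeasurableSet.biUnion (Set.to_countable _) fun p _ =>
      (MeasurableSet.measurableAtom_of_countable _).prod
        (MeasurableSet.measurableAtom_of_countable _)
  have : Nonempty (Fin m) := ⟨⟨0, hm⟩⟩
  obtain ⟨F, hF⟩ := aux_average μ E hE (m ^ K) (c.M ^ (K + 1)) (by
    intro p
    by_cases hp : p ∈ G
    · have h1 := aux_count4 m c.M K (Finset.univ.filter (fun x => (x, p.2) ∈ G)) (hcard p.2)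
        (measurableAtom p.1) (by
          have := measurableAtom_subset (hsec p.2) (x := p.1) hp
          simpa using this)
      have h2 : ((Finset.univ.filter (fun x => (x, p.2) ∈ G) : Finset X1) : Set X1)
        = {x | (x, p.2) ∈ G} := by simp
      rw [h2] at h1
      have h3 : ∀ F, p ∈ E F ↔
        ∃ x ∈ measurableAtom p.1, ∀ i, auxBad {x | (x, p.2) ∈ G} x (F i) :=
          fun F => ⟨fun h => h.2, fun h => ⟨hp, h⟩⟩
      simp_rw [h3]
      exact h1
    · have h3 : ∀ F, ¬ p ∈ E F := fun F h => hp h.1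
      simp [h3])
  refine ⟨fun i => auxB G m hm (F i), fun i => rfl, μ (E F), hF, ?_⟩
  calc _ ≤ μ (H ∪ E F) := by
        apply measure_mono
        intro p hp
        by_cases hpH : p ∈ H
        · exact Or.inl hpH
        · right
          refine ⟨hpH, p.1, mem_measurableAtom_self _, ?_⟩
          intro i
          by_contra hb
          exact (Set.mem_iInter.1 hp i) (aux_auxB G m hm (F i) p hpH hb)
    _ ≤ μ H + μ (E F) := measure_union_le _ _
    _ = _ := by rw [hH, measure_toMeasurable]

open Classical in
lemma aux_merge {X1 X2 : Type} [Nonempty X1] (K : ℕ) (b : Fin (K + 1) → BCode X1 X2) :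
    ∃ c : ACode X1 X2, c.M = ∑ i, (b i).M ∧ (c.T)ᶜ ⊆ ⋂ i, ((b i).T)ᶜ := by
  have hpos : 1 ≤ ∑ i, (b i).M :=
    (b 0).hM.trans (Finset.single_le_sum (f := fun i => (b i).M) (fun _ _ => Nat.zero_le _)
      (Finset.mem_univ 0))
  let e := finSigmaFinEquiv (n := fun i => (b i).M)
  let c : ACode X1 X2 :=
    { M := ∑ i, (b i).M
      hM := hpos
      enc := fun p => if h : ∃ i, p ∈ (b i).T then e ⟨h.choose, (b h.choose).enc p.1⟩
        else ⟨0, hpos⟩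
      dec := fun q => (b (e.symm q.1).1).dec ((e.symm q.1).2, q.2) }
  refine ⟨c, rfl, ?_⟩
  intro p hp
  simp only [Set.mem_iInter, Set.mem_compl_iff]
  by_contra! h
  apply hp
  change (b (e.symm (c.enc p)).1).dec ((e.symm (c.enc p)).2, p.2) = p.1
  have h1 : c.enc p = e ⟨h.choose, (b h.choose).enc p.1⟩ := by
    simp only [c]
    rw [dif_pos h]
  rw [h1, Equiv.symm_apply_apply]
  exact h.choose_spec

lemma aux_conv (n : ℕ) (hn : 1 ≤ n) (ε : ℝ≥0∞) (a : ℝ) :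
    (a : EReal) ≤ (((n : ℝ)⁻¹ : ℝ) : EReal) * ENNReal.log ε⁻¹ ↔
      ε ≤ ENNReal.ofReal (Real.exp (-(n * a))) := by
  have hn0 : (0 : ℝ) < n := by exact_mod_cast hn
  rw [EReal.coe_inv, ← EReal.div_eq_inv_mul,
    EReal.le_div_iff_mul_le (by exact_mod_cast hn0) (EReal.coe_ne_top _), ENNReal.log_inv,
    EReal.le_neg, ← ENNReal.log_le_log_iff, ENNReal.log_ofReal_of_pos (Real.exp_pos _),
    Real.log_exp]
  rw [← EReal.coe_mul, ← EReal.coe_neg, mul_comm]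

lemma aux_log_tendsto (s : ℝ) (hs : 1 < s) :
    Tendsto (fun n : ℕ => (n : ℝ)⁻¹ * Real.log ((⌊(n : ℝ) ^ s⌋₊ : ℝ) + 1)) atTop (𝓝 0) := by
  have h1 : Tendsto (fun n : ℕ => (n : ℝ)⁻¹ * (Real.log 2 + s * Real.log n)) atTop (𝓝 0) := by
    have h2 : Tendsto (fun x : ℝ => Real.log x / x) atTop (𝓝 0) :=
      Real.isLittleO_log_id_atTop.tendsto_div_nhds_zero
    have h3 := h2.comp (tendsto_natCast_atTop_atTop (R := ℝ))
    have h4 : Tendsto (fun n : ℕ => (n : ℝ)⁻¹) atTop (𝓝 0) := tendsto_inv_atTop_nhds_zero_nat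
    have h5 := (h4.mul_const (Real.log 2)).add (h3.const_mul s)
    simp only [zero_mul, mul_zero, add_zero] at h5
    refine h5.congr fun n => ?_
    simp only [Function.comp]
    ring
  refine squeeze_zero' ?_ ?_ h1
  · filter_upwards with n
    apply mul_nonneg (by positivity)
    apply Real.log_nonneg
    have : (0 : ℝ) ≤ (⌊(n : ℝ) ^ s⌋₊ : ℝ) := by positivity
    linarith
  · filter_upwards [eventually_ge_atTop 1] with n hn
    have hn1 : (1 : ℝ) ≤ n := by exact_mod_cast hn
    apply mul_le_mul_of_nonneg_left _ (by positivity)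
    rw [← Real.log_rpow (by linarith), ← Real.log_mul (by norm_num) (by positivity)]
    apply Real.log_le_log (by positivity)
    have h6 : (⌊(n : ℝ) ^ s⌋₊ : ℝ) ≤ (n : ℝ) ^ s := Nat.floor_le (by positivity)
    have h7 : (1 : ℝ) ≤ (n : ℝ) ^ s := Real.one_le_rpow hn1 (by linarith)
    linarith

lemma aux_B_le_A (X1 X2 : ℕ → Type)
    [∀ n, Nonempty (X1 n)] [∀ n, MeasurableSpace (X1 n)] [∀ n, MeasurableSpace (X2 n)]
    (μ : ∀ n, Measure (X1 n × X2 n)) (R s : ℝ) (hs : 1 < s) :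
    rhoBMulti (fun n => ⌊(n : ℝ) ^ s⌋₊) μ R ≤ rhoA μ R := by
  apply iSup₂_le
  intro b hb
  choose c hcM hcT using fun n => aux_merge _ (b n)
  refine le_iSup₂_of_le c ?_ ?_
  · unfold rateA
    rw [limsup_le_iff']
    intro y hy
    obtain ⟨z, hz1, hz2⟩ := EReal.lt_iff_exists_real_btwn.1 hy
    have hRz : R < z := by exact_mod_cast hz1
    have h1 : rateBMulti (fun n => ⌊(n : ℝ) ^ s⌋₊) b < (((R + z) / 2 : ℝ) : EReal) :=
      lt_of_le_of_lt hb (by exact_mod_cast (by linarith : R < (R + z) / 2))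
    have h2 := eventually_lt_of_limsup_lt h1
    have h3 := (aux_log_tendsto s hs).eventually_lt_const (by linarith : 0 < (z - R) / 2)
    filter_upwards [h2, h3] with n hn2 hn3
    refine le_trans ?_ hz2.le
    have hn2' : (n : ℝ)⁻¹ * Real.log (⨆ i, ((b n i).M : ℝ)) < (R + z) / 2 := by
      exact_mod_cast hn2
    have hbdd : BddAbove (Set.range fun i => ((b n i).M : ℝ)) := Set.finite_range _ |>.bddAbove
    have hsup : ∀ i, ((b n i).M : ℝ) ≤ ⨆ i, ((b n i).M : ℝ) := fun i => le_ciSup hbdd i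
    have hpos : (0 : ℝ) < ⨆ i, ((b n i).M : ℝ) :=
      lt_of_lt_of_le (by exact_mod_cast (b n 0).hM) (hsup 0)
    have hM : ((c n).M : ℝ) ≤ ((⌊(n : ℝ) ^ s⌋₊ : ℝ) + 1) * ⨆ i, ((b n i).M : ℝ) := by
      rw [hcM n]
      push_cast
      calc _ ≤ ∑ i : Fin (⌊(n : ℝ) ^ s⌋₊ + 1), (⨆ i, ((b n i).M : ℝ)) :=
            Finset.sum_le_sum fun i _ => hsup i
        _ = _ := by simp
    have hlog : Real.log ((c n).M : ℝ) ≤ Real.log ((⌊(n : ℝ) ^ s⌋₊ : ℝ) + 1) +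
        Real.log (⨆ i, ((b n i).M : ℝ)) := by
      rw [← Real.log_mul (by positivity) hpos.ne']
      exact Real.log_le_log (by exact_mod_cast (c n).hM) hM
    have := mul_le_mul_of_nonneg_left hlog (by positivity : (0 : ℝ) ≤ (n : ℝ)⁻¹)
    rw [mul_add] at this
    exact_mod_cast (by linarith : (n : ℝ)⁻¹ * Real.log ((c n).M : ℝ) ≤ z)
  · refine liminf_le_liminf ?_
    filter_upwards with n
    apply mul_le_mul_of_nonneg_left
    · exact ENNReal.log_le_log (ENNReal.inv_le_inv.2 (measure_mono (hcT n)))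
    · exact_mod_cast (by positivity : (0 : ℝ) ≤ (n : ℝ)⁻¹)

/-- Arithmetic bound on the additional error. -/
lemma aux_bound (R r C : ℝ) (hR : 0 < R) (hr : r < R) (k : ℕ → ℕ) (hk : Tendsto k atTop atTop) :
    ∀ᶠ n : ℕ in atTop, ∀ (M : ℕ) (e : ℝ≥0∞), 1 ≤ M → (n : ℝ)⁻¹ * Real.log M ≤ r →
      e * (⌊Real.exp (n * R)⌋₊ ^ (k n + 1) : ℕ) ≤ (M ^ (k n + 1 + 1) : ℕ) →
      e ≤ ENNReal.ofReal (Real.exp (-(n * C))) := by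
  have hδ : 0 < (R - r) / 2 := by linarith
  have h1 : ∀ᶠ n : ℕ in atTop, Real.log 2 ≤ n * ((R - r) / 2) :=
    (tendsto_natCast_atTop_atTop.atTop_mul_const hδ).eventually_ge_atTop _
  have h2 : ∀ᶠ n : ℕ in atTop, C + r ≤ (k n : ℝ) * ((R - r) / 2) :=
    ((tendsto_natCast_atTop_atTop.comp hk).atTop_mul_const hδ).eventually_ge_atTop _
  filter_upwards [h1, h2, eventually_ge_atTop 1] with n hn1 hn2 hn M e hM1 hM he
  have hn0 : (0 : ℝ) < n := by exact_mod_cast hn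
  have hM0 : (0 : ℝ) < M := by exact_mod_cast hM1
  have hMr : Real.log M ≤ n * r := by
    have := mul_le_mul_of_nonneg_left hM hn0.le
    rwa [← mul_assoc, mul_inv_cancel₀ hn0.ne', one_mul] at this
  set m := ⌊Real.exp (n * R)⌋₊ with hm
  have hexp1 : 1 ≤ Real.exp (n * R) := Real.one_le_exp (by positivity)
  have hm1 : 1 ≤ m := Nat.le_floor (by simpa using hexp1)
  have hm1' : (1 : ℝ) ≤ m := by exact_mod_cast hm1
  have hm2 : Real.exp (n * R) ≤ 2 * m := by
    have := Nat.lt_floor_add_one (Real.exp (n * R))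
    rw [← hm] at this
    linarith
  have hlogm : n * R - Real.log 2 ≤ Real.log m := by
    have := Real.log_le_log (Real.exp_pos _) hm2
    rw [Real.log_exp, Real.log_mul (by norm_num) (by positivity)] at this
    linarith
  have hreal : (M : ℝ) ^ (k n + 1 + 1) ≤ Real.exp (-(n * C)) * (m : ℝ) ^ (k n + 1) := by
    rw [← Real.log_le_log_iff (by positivity) (by positivity),
      Real.log_mul (by positivity) (by positivity), Real.log_exp, Real.log_pow, Real.log_pow]
    push_cast
    have e1 : Real.log M - Real.log m ≤ -(n * ((R - r) / 2)) := by linarith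
    have e2 := mul_le_mul_of_nonneg_left e1 (by positivity : (0 : ℝ) ≤ (k n : ℝ) + 1)
    have e3 := mul_le_mul_of_nonneg_left hn2 hn0.le
    have e4 : 0 ≤ n * ((R - r) / 2) := by positivity
    nlinarith
  have he' : e * (m ^ (k n + 1) : ℕ) ≤
      ENNReal.ofReal (Real.exp (-(n * C))) * (m ^ (k n + 1) : ℕ) := by
    refine he.trans ?_
    rw [← ENNReal.ofReal_natCast, ← ENNReal.ofReal_natCast,
      ← ENNReal.ofReal_mul (Real.exp_pos _).le]
    apply ENNReal.ofReal_le_ofReal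
    push_cast
    exact hreal
  have hne : ((m ^ (k n + 1) : ℕ) : ℝ≥0∞) ≠ 0 := by
    have : m ^ (k n + 1) ≠ 0 := by positivity
    exact_mod_cast this
  exact (ENNReal.mul_le_mul_iff_left hne (ENNReal.natCast_ne_top _)).1 he'

lemma aux_A_le_B (X1 X2 : ℕ → Type)
    [∀ n, Fintype (X1 n)] [∀ n, Nonempty (X1 n)]
    [∀ n, Fintype (X2 n)] [∀ n, Nonempty (X2 n)]
    [∀ n, MeasurableSpace (X1 n)] [∀ n, MeasurableSpace (X2 n)]
    (μ : ∀ n, Measure (X1 n × X2 n)) (hμ : ∀ n, IsProbabilityMeasure (μ n))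
    (R r : ℝ) (hR : 0 < R) (hr : r < R) (k : ℕ → ℕ) (hk : Tendsto k atTop atTop) :
    rhoA μ r ≤ rhoBMulti k μ R := by
  apply iSup₂_le
  intro c hc
  have hm : ∀ n : ℕ, 1 ≤ ⌊Real.exp (n * R)⌋₊ := fun n =>
    Nat.le_floor (by simpa using Real.one_le_exp (by positivity : 0 ≤ (n : ℝ) * R))
  choose b hbM e he hbT using fun n => aux_random (μ n) (c n) _ (hm n) (k n + 1)
  refine le_iSup₂_of_le b ?_ ?_
  · apply limsup_le_of_le
    · isBoundedDefault
    filter_upwards [eventually_ge_atTop 1] with n hn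
    have hn0 : (0 : ℝ) < n := by exact_mod_cast hn
    simp only [hbM, ciSup_const]
    have h1 : Real.log (⌊Real.exp (n * R)⌋₊ : ℝ) ≤ n * R := by
      rw [Real.log_le_iff_le_exp (by exact_mod_cast hm n)]
      exact Nat.floor_le (Real.exp_pos _).le
    have h2 := mul_le_mul_of_nonneg_left h1 (by positivity : (0 : ℝ) ≤ (n : ℝ)⁻¹)
    rw [← mul_assoc, inv_mul_cancel₀ hn0.ne', one_mul] at h2
    exact_mod_cast h2
  · rw [le_liminf_iff']
    intro y hy
    obtain ⟨a, ha1, ha2⟩ := EReal.lt_iff_exists_real_btwn.1 hy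
    obtain ⟨a', ha3, ha4⟩ := EReal.lt_iff_exists_real_btwn.1 ha2
    have haa : a < a' := by exact_mod_cast ha3
    have h1 := eventually_lt_of_lt_liminf ha4
    have h2 : rateA c < (((R + r) / 2 : ℝ) : EReal) :=
      lt_of_le_of_lt hc (by exact_mod_cast (by linarith : r < (R + r) / 2))
    have h3 := eventually_lt_of_limsup_lt h2
    have h4 := aux_bound R ((R + r) / 2) a' hR (by linarith) k hk
    have h5 : ∀ᶠ n : ℕ in atTop, Real.log 2 ≤ n * (a' - a) :=
      (tendsto_natCast_atTop_atTop.atTop_mul_const (by linarith)).eventually_ge_atTop _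
    filter_upwards [h1, h3, h4, h5, eventually_ge_atTop 1] with n hn1 hn3 hn4 hn5 hn
    refine ha1.le.trans ((aux_conv n hn _ a).2 ?_)
    have g1 := (aux_conv n hn _ a').1 hn1.le
    have g2 := hn4 (c n).M (e n) (c n).hM (by exact_mod_cast hn3.le) (he n)
    refine (hbT n).trans ((add_le_add g1 g2).trans ?_)
    rw [← ENNReal.ofReal_add (Real.exp_pos _).le (Real.exp_pos _).le]
    apply ENNReal.ofReal_le_ofReal
    rw [← two_mul, ← Real.exp_log (by norm_num : (0 : ℝ) < 2), ← Real.exp_add]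
    apply Real.exp_le_exp.2
    linarith

theorem statement2
    (X1 X2 : ℕ → Type)
    [∀ n, Fintype (X1 n)] [∀ n, Nonempty (X1 n)]
    [∀ n, Fintype (X2 n)] [∀ n, Nonempty (X2 n)]
    [∀ n, MeasurableSpace (X1 n)] [∀ n, MeasurableSpace (X2 n)]
    (μ : ∀ n, Measure (X1 n × X2 n)) (hμ : ∀ n, IsProbabilityMeasure (μ n))
    (R s : ℝ) (hR : 0 < R) (hs : 1 < s)
    (hcont : ContinuousAt (fun r : ℝ => rhoA μ r) R) :
    rhoA μ R = rhoBMulti (fun n => ⌊(n : ℝ) ^ s⌋₊) μ R := by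
  apply le_antisymm
  · have hk : Tendsto (fun n : ℕ => ⌊(n : ℝ) ^ s⌋₊) atTop atTop :=
      tendsto_nat_floor_atTop.comp
        ((tendsto_rpow_atTop (by linarith)).comp tendsto_natCast_atTop_atTop)
    have h1 : Tendsto (fun r : ℝ => rhoA μ r) (𝓝[<] R) (𝓝 (rhoA μ R)) :=
      hcont.tendsto.mono_left nhdsWithin_le_nhds
    refine le_of_tendsto h1 ?_
    filter_upwards [self_mem_nhdsWithin] with r hr
    exact aux_A_le_B X1 X2 μ hμ R r hR hr _ hk
  · exact aux_B_le_A X1 X2 μ R s hs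

end
end

section
/- If ε_C(R|μ) ≠ 1, then 1/(1 − ε_C(R|μ)) = inf{ G_u(ν‖μ) : ν a source with R_C(ν) ≤ R }. -/
open MeasureTheory Filter Topology
open scoped ENNReal

noncomputable section

/-- Rate of a code sequence: `limsup (1/n) log ‖c_n‖`. -/
def rate {C : ℕ → Type} (size : ∀ n, C n → ℝ) (c : ∀ n, C n) : EReal :=
  Filter.limsup (fun n : ℕ => (((n : ℝ)⁻¹ * Real.log (size n (c n)) : ℝ) : EReal)) Filter.atTop

/-- `G(ν‖μ) = ∫ (dν/dμ) dν` if `ν ≪ μ`, `+∞` otherwise. -/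
def Gdiv {Ω : Type} [MeasurableSpace Ω] (ν μ : Measure Ω) : ℝ≥0∞ :=
  open Classical in
  if ν ≪ μ then ∫⁻ x, ν.rnDeriv μ x ∂ν else ⊤

/-- `G_u(ν‖μ) = limsup_n G(ν_n‖μ_n)`. -/
def Gu {Ω : ℕ → Type} [∀ n, MeasurableSpace (Ω n)]
    (ν μ : ∀ n, Measure (Ω n)) : ℝ≥0∞ :=
  Filter.limsup (fun n => Gdiv (ν n) (μ n)) Filter.atTop

/-- `R_C(ν)`: the infimum of rates of code sequences whose success probability under `ν`
tends to one. -/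
def RC {Ω : ℕ → Type} [∀ n, MeasurableSpace (Ω n)] {C : ℕ → Type}
    (size : ∀ n, C n → ℝ) (T : ∀ n, C n → Set (Ω n)) (ν : ∀ n, Measure (Ω n)) : EReal :=
  ⨅ (c : ∀ n, C n) (_ : Filter.Tendsto (fun n => ν n (T n (c n))) Filter.atTop (nhds 1)),
    rate size c

/-- `ε_C(R|μ)`: infimum over code sequences of rate at most `R` of the limsup of the
error probabilities. -/
def epsC {Ω : ℕ → Type} [∀ n, MeasurableSpace (Ω n)] {C : ℕ → Type}
    (size : ∀ n, C n → ℝ) (T : ∀ n, C n → Set (Ω n)) (μ : ∀ n, Measure (Ω n)) (R : ℝ) :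
    ℝ≥0∞ :=
  ⨅ (c : ∀ n, C n) (_ : rate size c ≤ (R : EReal)),
    Filter.limsup (fun n => μ n (T n (c n))ᶜ) Filter.atTop

theorem aux_diag (P : ℕ → ℕ → Prop) (h : ∀ k, ∀ᶠ n in atTop, P k n) :
    ∃ k : ℕ → ℕ, Tendsto k atTop atTop ∧ ∀ᶠ n in atTop, P (k n) n := by
  classical
  refine ⟨fun n => Nat.findGreatest (fun k => P k n) n, ?_, ?_⟩
  · rw [tendsto_atTop]
    intro K
    filter_upwards [h K, eventually_ge_atTop K] with n hn hK
    exact Nat.le_findGreatest hK hn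
  · filter_upwards [h 0] with n hn
    exact Nat.findGreatest_spec (P := fun k => P k n) (Nat.zero_le n) hn

theorem aux_lim (k : ℕ → ℕ) (hk : Tendsto k atTop atTop) :
    Tendsto (fun n => (1 : ℝ) / ((k n : ℝ) + 1)) atTop (nhds 0) :=
  tendsto_one_div_add_atTop_nhds_zero_nat.comp hk

theorem aux_RC {Ω : ℕ → Type} [∀ n, MeasurableSpace (Ω n)] {C : ℕ → Type}
    (size : ∀ n, C n → ℝ) (T : ∀ n, C n → Set (Ω n)) (ν : ∀ n, Measure (Ω n))
    (hν : ∀ n, IsProbabilityMeasure (ν n)) (R : ℝ) (h : RC size T ν ≤ (R : EReal)) :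
    ∃ c : ∀ n, C n, rate size c ≤ (R : EReal) ∧
      Tendsto (fun n => ν n (T n (c n))) atTop (nhds 1) := by
  have h1 : ∀ k : ℕ, ∃ c : ∀ n, C n, Tendsto (fun n => ν n (T n (c n))) atTop (nhds 1) ∧
      rate size c < ((R + 1 / ((k : ℝ) + 1) : ℝ) : EReal) := by
    intro k
    have h2 : RC size T ν < ((R + 1 / ((k : ℝ) + 1) : ℝ) : EReal) := by
      refine lt_of_le_of_lt h ?_
      have : (0 : ℝ) < 1 / ((k : ℝ) + 1) := by positivity
      exact EReal.coe_lt_coe_iff.2 (by linarith)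
    unfold RC at h2
    simp only [iInf_lt_iff] at h2
    obtain ⟨c, hc, hr⟩ := h2
    exact ⟨c, hc, hr⟩
  choose c hc hr using h1
  obtain ⟨k, hk, hP⟩ := aux_diag (fun k n =>
    (((n : ℝ)⁻¹ * Real.log (size n (c k n)) : ℝ) : EReal) < ((R + 1 / ((k : ℝ) + 1) : ℝ) : EReal) ∧
    1 - ENNReal.ofReal (1 / ((k : ℝ) + 1)) < ν n (T n (c k n))) (by
      intro k
      refine (eventually_lt_of_limsup_lt (hr k)).and ((hc k).eventually (lt_mem_nhds ?_))
      refine ENNReal.sub_lt_self ENNReal.one_ne_top one_ne_zero ?_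
      have : (0 : ℝ) < 1 / ((k : ℝ) + 1) := by positivity
      simpa using this)
  refine ⟨fun n => c (k n) n, ?_, ?_⟩
  · have hl : Tendsto (fun n => ((R + 1 / ((k n : ℝ) + 1) : ℝ) : EReal)) atTop (nhds (R : EReal)) := by
      refine (continuous_coe_real_ereal.tendsto R).comp ?_
      simpa using (aux_lim k hk).const_add R
    rw [← hl.limsup_eq]
    exact limsup_le_limsup (hP.mono fun n hn => hn.1.le)
  · have hl : Tendsto (fun n => 1 - ENNReal.ofReal (1 / ((k n : ℝ) + 1))) atTop (nhds 1) := by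
      have h0 := ENNReal.tendsto_ofReal (aux_lim k hk)
      have := ENNReal.Tendsto.sub (tendsto_const_nhds (x := (1 : ℝ≥0∞))) h0
        (Or.inl ENNReal.one_ne_top)
      simpa using this
    exact tendsto_of_tendsto_of_tendsto_of_le_of_le' hl tendsto_const_nhds
      (hP.mono fun n hn => hn.2.le) (Eventually.of_forall fun n => prob_le_one)

theorem aux_mono : Monotone (fun x : ℝ≥0∞ => (1 - x)⁻¹) := fun a b h =>
  ENNReal.inv_le_inv.2 (tsub_le_tsub_left h 1)

theorem aux_cont : Continuous (fun x : ℝ≥0∞ => (1 - x)⁻¹) :=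
  continuous_inv.comp (ENNReal.continuous_sub_left ENNReal.one_ne_top)

theorem aux_compl {Ω : Type} [MeasurableSpace Ω] (μ : Measure Ω) [IsProbabilityMeasure μ]
    {T : Set Ω} (hT : MeasurableSet T) : 1 - μ Tᶜ = μ T := by
  have := prob_compl_eq_one_sub (μ := μ) hT.compl
  rw [compl_compl] at this
  exact this.symm

theorem aux_limsup (u : ℕ → ℝ≥0∞) :
    (1 - limsup u atTop)⁻¹ = limsup (fun n => (1 - u n)⁻¹) atTop :=
  aux_mono.map_limsup_of_continuousAt u aux_cont.continuousAt

theorem aux_cs {Ω : Type} [MeasurableSpace Ω] (ν μ : Measure Ω) [IsProbabilityMeasure μ]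
    [IsProbabilityMeasure ν] {T : Set Ω} (hT : MeasurableSet T) :
    (ν T) ^ 2 * (μ T)⁻¹ ≤ Gdiv ν μ := by
  unfold Gdiv
  split_ifs with h
  · have hG : ∫⁻ x, ν.rnDeriv μ x ∂ν = ∫⁻ x, (ν.rnDeriv μ x) ^ (2 : ℝ) ∂μ := by
      rw [← lintegral_rnDeriv_mul h (Measure.measurable_rnDeriv ν μ).aemeasurable]
      refine lintegral_congr fun x => ?_
      rw [ENNReal.rpow_two, sq]
    have hcs := ENNReal.lintegral_mul_le_Lp_mul_Lq (μ.restrict T)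
      (Real.HolderConjugate.two_two)
      (Measure.measurable_rnDeriv ν μ).aemeasurable
      (aemeasurable_const (b := (1 : ℝ≥0∞)))
    have hle : ∫⁻ x in T, (ν.rnDeriv μ x) ^ (2 : ℝ) ∂μ ≤ ∫⁻ x, (ν.rnDeriv μ x) ^ (2 : ℝ) ∂μ :=
      setLIntegral_le_lintegral _ _
    simp only [Pi.mul_apply, mul_one, ENNReal.one_rpow, lintegral_one, Measure.restrict_apply_univ,
      Measure.setLIntegral_rnDeriv h] at hcs
    rw [hG, ← div_eq_mul_inv]
    refine ENNReal.div_le_of_le_mul ?_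
    refine le_trans ?_ (mul_le_mul_left hle (μ T))
    calc (ν T) ^ 2 ≤ _ := pow_le_pow_left₀ (zero_le) hcs 2
      _ = _ := by
        rw [mul_pow, ← ENNReal.rpow_natCast, ← ENNReal.rpow_natCast, ← ENNReal.rpow_mul,
          ← ENNReal.rpow_mul]
        norm_num
  · exact le_top

theorem aux_lower {Ω : ℕ → Type} [∀ n, MeasurableSpace (Ω n)]
    (ν μ : ∀ n, Measure (Ω n)) (hμ : ∀ n, IsProbabilityMeasure (μ n))
    (hν : ∀ n, IsProbabilityMeasure (ν n)) (S : ∀ n, Set (Ω n)) (hS : ∀ n, MeasurableSet (S n))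
    (h : Tendsto (fun n => ν n (S n)) atTop (nhds 1)) :
    (1 - limsup (fun n => μ n (S n)ᶜ) atTop)⁻¹ ≤ Gu ν μ := by
  rw [aux_limsup]
  simp only [aux_compl _ (hS _)]
  have h2 : Tendsto (fun n => ν n (S n) ^ 2) atTop (nhds 1) := by
    simpa using ENNReal.Tendsto.pow (n := 2) h
  have key : ∀ t : ℝ≥0∞, t < 1 → t * limsup (fun n => (μ n (S n))⁻¹) atTop ≤ Gu ν μ := by
    intro t ht
    rw [← ENNReal.limsup_const_mul_of_ne_top (ne_top_of_lt ht)]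
    refine limsup_le_limsup ?_
    filter_upwards [h2.eventually (lt_mem_nhds ht)] with n hn
    exact (mul_le_mul_left hn.le _).trans (aux_cs (ν n) (μ n) (hS n))
  have hc : Tendsto (fun t : ℝ≥0∞ => t * limsup (fun n => (μ n (S n))⁻¹) atTop) (𝓝[<] 1)
      (nhds (1 * limsup (fun n => (μ n (S n))⁻¹) atTop)) :=
    ENNReal.Tendsto.mul_const (tendsto_id.mono_left nhdsWithin_le_nhds) (Or.inl one_ne_zero)
  rw [one_mul] at hc
  have : (𝓝[<] (1 : ℝ≥0∞)).NeBot := nhdsLT_neBot_of_exists_lt ⟨0, zero_lt_one⟩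
  exact le_of_tendsto hc (eventually_nhdsWithin_of_forall fun t ht => key t ht)

theorem aux_cond {Ω : Type} [MeasurableSpace Ω] (μ : Measure Ω) [IsProbabilityMeasure μ]
    {T : Set Ω} (hT : MeasurableSet T) (h0 : μ T ≠ 0) :
    Gdiv (ProbabilityTheory.cond μ T) μ ≤ (μ T)⁻¹ := by
  have hac : ProbabilityTheory.cond μ T ≪ μ := ProbabilityTheory.cond_absolutelyContinuous
  have : IsProbabilityMeasure (ProbabilityTheory.cond μ T) :=
    ProbabilityTheory.cond_isProbabilityMeasure h0
  have hwd : ProbabilityTheory.cond μ T = μ.withDensity (T.indicator fun _ => (μ T)⁻¹) := by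
    rw [withDensity_indicator hT, withDensity_const]; rfl
  have hr : (ProbabilityTheory.cond μ T).rnDeriv μ =ᵐ[μ] T.indicator fun _ => (μ T)⁻¹ := by
    rw [hwd]
    exact Measure.rnDeriv_withDensity μ (measurable_const.indicator hT)
  unfold Gdiv
  rw [if_pos hac]
  calc ∫⁻ x, (ProbabilityTheory.cond μ T).rnDeriv μ x ∂(ProbabilityTheory.cond μ T)
      ≤ ∫⁻ x, (μ T)⁻¹ ∂(ProbabilityTheory.cond μ T) := by
        refine lintegral_mono_ae ?_
        filter_upwards [hac.ae_le hr] with x hx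
        rw [hx]
        exact Set.indicator_le_self _ _ _
    _ = (μ T)⁻¹ := by simp

theorem statement4
    (Ω : ℕ → Type) [∀ n, MeasurableSpace (Ω n)]
    (C : ℕ → Type) [∀ n, Nonempty (C n)]
    (size : ∀ n, C n → ℝ) (hsize : ∀ n (c : C n), 1 ≤ size n c)
    (T : ∀ n, C n → Set (Ω n)) (hT : ∀ n (c : C n), MeasurableSet (T n c))
    (μ : ∀ n, Measure (Ω n)) (hμ : ∀ n, IsProbabilityMeasure (μ n))
    (R : ℝ)
    (hne : epsC size T μ R ≠ 1) :
    (1 - epsC size T μ R)⁻¹ =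
      ⨅ (ν : ∀ n, Measure (Ω n)) (_ : ∀ n, IsProbabilityMeasure (ν n))
        (_ : RC size T ν ≤ (R : EReal)), Gu ν μ := by
  have hL : (1 - epsC size T μ R)⁻¹ = ⨅ (c : ∀ n, C n) (_ : rate size c ≤ (R : EReal)),
      (1 - limsup (fun n => μ n (T n (c n))ᶜ) atTop)⁻¹ := by
    unfold epsC
    have ht : (fun x : ℝ≥0∞ => (1 - x)⁻¹) ⊤ = ⊤ := by simp
    refine (aux_mono.map_iInf_of_continuousAt aux_cont.continuousAt ht).trans ?_
    refine iInf_congr fun c => ?_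
    exact aux_mono.map_iInf_of_continuousAt aux_cont.continuousAt ht
  rw [hL]
  apply le_antisymm
  · refine le_iInf fun ν => le_iInf fun hν => le_iInf fun hR => ?_
    obtain ⟨c, hc, hc1⟩ := aux_RC size T ν hν R hR
    exact (iInf₂_le c hc).trans (aux_lower ν μ hμ hν (fun n => T n (c n)) (fun n => hT n _) hc1)
  · refine le_iInf fun c => le_iInf fun hc => ?_
    by_cases he : limsup (fun n => μ n (T n (c n))ᶜ) atTop < 1
    · classical
      have hpos : ∀ᶠ n in atTop, μ n (T n (c n)) ≠ 0 := by
        filter_upwards [eventually_lt_of_limsup_lt he] with n hn h0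
        rw [prob_compl_eq_one_sub (hT n _), h0] at hn
        simp at hn
      let ν : ∀ n, Measure (Ω n) := fun n =>
        if μ n (T n (c n)) = 0 then μ n else ProbabilityTheory.cond (μ n) (T n (c n))
      have hνe : ∀ n, μ n (T n (c n)) ≠ 0 → ν n = ProbabilityTheory.cond (μ n) (T n (c n)) :=
        fun n hn => if_neg hn
      have hν : ∀ n, IsProbabilityMeasure (ν n) := by
        intro n
        by_cases h0 : μ n (T n (c n)) = 0
        · have : ν n = μ n := if_pos h0
          rw [this]; exact hμ n
        · rw [hνe n h0]; exact ProbabilityTheory.cond_isProbabilityMeasure h0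
      have hR : RC size T ν ≤ (R : EReal) := by
        refine (iInf₂_le c ?_).trans hc
        refine tendsto_const_nhds.congr' ?_
        filter_upwards [hpos] with n hn
        rw [hνe n hn, ProbabilityTheory.cond_apply (hT n _), Set.inter_self,
          ENNReal.inv_mul_cancel hn (measure_ne_top _ _)]
      refine (iInf_le_of_le ν (iInf₂_le hν hR)).trans ?_
      rw [aux_limsup]
      refine limsup_le_limsup ?_
      filter_upwards [hpos] with n hn
      rw [hνe n hn, aux_compl _ (hT n _)]
      exact aux_cond (μ n) (hT n _) hn
    · rw [tsub_eq_zero_of_le (not_lt.1 he), ENNReal.inv_zero]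
      exact le_top

end
end

section
/- For any source μ, any real numbers R and s, and any sequence (k_n) of nonnegative integers with k_n ≤ n^s for all n, the single-code and multi-code low-rate reliability functions coincide: ρ*_C(R|μ) = ρ*_C(R|μ; (k_n)). -/
open MeasureTheory Filter Topology
open scoped ENNReal

noncomputable section

/-- `ρ*_C(R|μ)`: infimum over code sequences of rate at most `R` of
`limsup (1/n) log (1/μ_n(T_n(c_n)))`. -/
def rhoStarC {Ω : ℕ → Type} [∀ n, MeasurableSpace (Ω n)] {C : ℕ → Type}
    (size : ∀ n, C n → ℝ) (T : ∀ n, C n → Set (Ω n)) (μ : ∀ n, Measure (Ω n)) (R : ℝ) :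
    EReal :=
  ⨅ (c : ∀ n, C n) (_ : rate size c ≤ (R : EReal)),
    Filter.limsup
      (fun n : ℕ => (((n : ℝ)⁻¹ : ℝ) : EReal) * ENNReal.log (μ n (T n (c n)))⁻¹)
      Filter.atTop

/-- Rate of a multi-code sequence: `limsup (1/n) log (max_i ‖c_{i,n}‖)`. -/
def rateMulti {C : ℕ → Type} (k : ℕ → ℕ) (size : ∀ n, C n → ℝ)
    (c : ∀ n, Fin (k n + 1) → C n) : EReal :=
  Filter.limsup
    (fun n : ℕ => (((n : ℝ)⁻¹ * Real.log (⨆ i, size n (c n i)) : ℝ) : EReal)) Filter.atTop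

/-- `ρ*_C(R|μ;(k_n))`: infimum over multi-code sequences of rate at most `R` of
`limsup (1/n) log (1/μ_n(⋃_i T_n(c_{i,n})))`. -/
def rhoStarCMulti {Ω : ℕ → Type} [∀ n, MeasurableSpace (Ω n)] {C : ℕ → Type} (k : ℕ → ℕ)
    (size : ∀ n, C n → ℝ) (T : ∀ n, C n → Set (Ω n)) (μ : ∀ n, Measure (Ω n)) (R : ℝ) :
    EReal :=
  ⨅ (c : ∀ n, Fin (k n + 1) → C n) (_ : rateMulti k size c ≤ (R : EReal)),
    Filter.limsup
      (fun n : ℕ => (((n : ℝ)⁻¹ : ℝ) : EReal) * ENNReal.log (μ n (⋃ i, T n (c n i)))⁻¹)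
      Filter.atTop

theorem aux_tendsto (s : ℝ) (k : ℕ → ℕ) (hk : ∀ n : ℕ, (k n : ℝ) ≤ (n : ℝ) ^ s) :
    Tendsto (fun n : ℕ => (n : ℝ)⁻¹ * Real.log ((k n : ℝ) + 1)) atTop (𝓝 0) := by
  have h1 : Tendsto (fun n : ℕ => (n : ℝ)⁻¹) atTop (𝓝 0) :=
    tendsto_inv_atTop_zero.comp tendsto_natCast_atTop_atTop
  have h2 : Tendsto (fun n : ℕ => Real.log (n : ℝ) / (n : ℝ)) atTop (𝓝 0) :=
    (Real.isLittleO_log_id_atTop.tendsto_div_nhds_zero).comp tendsto_natCast_atTop_atTop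
  have h3 : Tendsto (fun n : ℕ => (n : ℝ)⁻¹ * Real.log 2 + |s| * (Real.log (n : ℝ) / (n : ℝ)))
      atTop (𝓝 0) := by
    simpa using (h1.mul_const (Real.log 2)).add (h2.const_mul |s|)
  refine squeeze_zero' (Eventually.of_forall fun n => ?_) ?_ h3
  · refine mul_nonneg (by positivity) (Real.log_nonneg ?_)
    have : (0 : ℝ) ≤ k n := by positivity
    linarith
  · filter_upwards [eventually_ge_atTop 1] with n hn
    have hn1 : (1 : ℝ) ≤ n := by exact_mod_cast hn
    have hn0 : (0 : ℝ) < n := by linarith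
    have ha : (n : ℝ) ^ s ≤ (n : ℝ) ^ |s| := Real.rpow_le_rpow_of_exponent_le hn1 (le_abs_self s)
    have hb : (1 : ℝ) ≤ (n : ℝ) ^ |s| := Real.one_le_rpow hn1 (abs_nonneg s)
    have hc : Real.log ((k n : ℝ) + 1) ≤ Real.log 2 + |s| * Real.log n := by
      rw [← Real.log_rpow hn0, ← Real.log_mul (by norm_num) (by positivity)]
      apply Real.log_le_log (by positivity)
      linarith [hk n]
    calc (n : ℝ)⁻¹ * Real.log ((k n : ℝ) + 1)
        ≤ (n : ℝ)⁻¹ * (Real.log 2 + |s| * Real.log n) := by gcongr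
      _ = _ := by ring

theorem aux_log {Ω : Type} [MeasurableSpace Ω] (μ : Measure Ω) [IsProbabilityMeasure μ] (m : ℕ)
    (A : Fin (m + 1) → Set Ω) (i : Fin (m + 1)) (hi : ∀ j, μ (A j) ≤ μ (A i)) (n : ℕ) :
    (((n : ℝ)⁻¹ : ℝ) : EReal) * ENNReal.log (μ (A i))⁻¹ ≤
      (((n : ℝ)⁻¹ : ℝ) : EReal) * ENNReal.log (μ (⋃ j, A j))⁻¹ +
        (((n : ℝ)⁻¹ * Real.log ((m : ℝ) + 1) : ℝ) : EReal) := by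
  have hm : (0 : ℝ) < (m : ℝ) + 1 := by positivity
  set K : ℝ≥0∞ := ENNReal.ofReal ((m : ℝ) + 1) with hK
  have hK0 : K ≠ 0 := by simp [hK, hm]
  have hKt : K ≠ ⊤ := by simp [hK]
  have hK' : K = ((m + 1 : ℕ) : ℝ≥0∞) := by
    rw [hK, ← ENNReal.ofReal_natCast]; push_cast; rfl
  have hU : μ (⋃ j, A j) ≤ K * μ (A i) := by
    calc μ (⋃ j, A j) ≤ ∑ j, μ (A j) := measure_iUnion_fintype_le _ _
      _ ≤ ∑ _j : Fin (m + 1), μ (A i) := Finset.sum_le_sum fun j _ => hi j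
      _ = K * μ (A i) := by rw [hK']; simp
  have hV : (μ (A i))⁻¹ ≤ (μ (⋃ j, A j))⁻¹ * K := by
    have h1 : (K * μ (A i))⁻¹ ≤ (μ (⋃ j, A j))⁻¹ := ENNReal.inv_le_inv.2 hU
    rw [ENNReal.mul_inv (Or.inl hK0) (Or.inl hKt)] at h1
    calc (μ (A i))⁻¹ = K⁻¹ * (μ (A i))⁻¹ * K := by
          rw [mul_comm, ← mul_assoc, ENNReal.mul_inv_cancel hK0 hKt, one_mul]
      _ ≤ _ := by gcongr
  have hn : (0 : EReal) ≤ (((n : ℝ)⁻¹ : ℝ) : EReal) := by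
    exact_mod_cast (by positivity : (0 : ℝ) ≤ (n : ℝ)⁻¹)
  have hL : ENNReal.log (μ (A i))⁻¹ ≤
      ENNReal.log (μ (⋃ j, A j))⁻¹ + ((Real.log ((m : ℝ) + 1) : ℝ) : EReal) := by
    rw [← ENNReal.log_ofReal_of_pos hm, ← ENNReal.log_mul_add]
    exact ENNReal.log_monotone hV
  have hA : (0 : EReal) ≤ ENNReal.log (μ (⋃ j, A j))⁻¹ := by
    rw [← ENNReal.log_one]
    exact ENNReal.log_monotone (ENNReal.one_le_inv.2 prob_le_one)
  have hB : (0 : EReal) ≤ ((Real.log ((m : ℝ) + 1) : ℝ) : EReal) := by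
    have : (0 : ℝ) ≤ m := by positivity
    exact_mod_cast Real.log_nonneg (by linarith : (1 : ℝ) ≤ (m : ℝ) + 1)
  calc _ ≤ (((n : ℝ)⁻¹ : ℝ) : EReal) *
        (ENNReal.log (μ (⋃ j, A j))⁻¹ + ((Real.log ((m : ℝ) + 1) : ℝ) : EReal)) :=
        mul_le_mul_of_nonneg_left hL hn
    _ = _ := by rw [EReal.left_distrib_of_nonneg hA hB, EReal.coe_mul]

theorem statement7
    (Ω : ℕ → Type) [∀ n, MeasurableSpace (Ω n)]
    (C : ℕ → Type) [∀ n, Nonempty (C n)]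
    (size : ∀ n, C n → ℝ) (hsize : ∀ n (c : C n), 1 ≤ size n c)
    (T : ∀ n, C n → Set (Ω n)) (hT : ∀ n (c : C n), MeasurableSet (T n c))
    (μ : ∀ n, Measure (Ω n)) (hμ : ∀ n, IsProbabilityMeasure (μ n))
    (R s : ℝ) (k : ℕ → ℕ) (hk : ∀ n : ℕ, (k n : ℝ) ≤ (n : ℝ) ^ s) :
    rhoStarC size T μ R = rhoStarCMulti k size T μ R := by
  apply le_antisymm
  · refine le_iInf₂ fun c hc => ?_
    have hex : ∀ n, ∃ i : Fin (k n + 1), ∀ j, μ n (T n (c n j)) ≤ μ n (T n (c n i)) := fun n =>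
      Finite.exists_max fun j => μ n (T n (c n j))
    choose i hi using hex
    refine iInf₂_le_of_le (fun n => c n (i n)) ?_ ?_
    · refine le_trans (limsup_le_limsup (Eventually.of_forall fun n => ?_)) hc
      apply EReal.coe_le_coe_iff.2
      refine mul_le_mul_of_nonneg_left (Real.log_le_log ?_ ?_) (by positivity)
      · linarith [hsize n (c n (i n))]
      · exact le_ciSup (f := fun j => size n (c n j)) (Set.finite_range _).bddAbove (i n)
    · have h0 : Filter.limsup (fun n : ℕ =>
          (((n : ℝ)⁻¹ * Real.log ((k n : ℝ) + 1) : ℝ) : EReal)) atTop = 0 := by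
        apply Tendsto.limsup_eq
        exact_mod_cast (continuous_coe_real_ereal.tendsto 0).comp (aux_tendsto s k hk)
      refine le_trans (limsup_le_limsup (Eventually.of_forall fun n =>
        aux_log (μ n) (k n) (fun j => T n (c n j)) (i n) (hi n) n)) ?_
      refine le_trans (EReal.limsup_add_le (Or.inr ?_) (Or.inr ?_)) ?_
      · rw [h0]; exact EReal.zero_ne_top
      · rw [h0]; exact EReal.zero_ne_bot
      · rw [h0, add_zero]
  · refine le_iInf₂ fun c hc => ?_
    refine iInf₂_le_of_le (fun n _ => c n) ?_ ?_
    · simpa [rateMulti, rate] using hc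
    · simp [Set.iUnion_const]

end
end

section
/- Suppose the system (C_n, ‖·‖, T_n) is subadditive. Then for any source μ, any real numbers R and s, and any sequence (k_n) of nonnegative integers with k_n ≤ n^s for all n, the single-code and multi-code quantities coincide: ε_C(R|μ) = ε_C(R|μ; (k_n)) and ρ_C(R|μ) = ρ_C(R|μ; (k_n)). -/
open MeasureTheory Filter Topology
open scoped ENNReal

noncomputable section

/-- `ρ_C(R|μ)`: supremum over code sequences of rate at most `R` of
`liminf (1/n) log (1/μ_n((T_n(c_n))ᶜ))`. -/
def rhoC {Ω : ℕ → Type} [∀ n, MeasurableSpace (Ω n)] {C : ℕ → Type}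
    (size : ∀ n, C n → ℝ) (T : ∀ n, C n → Set (Ω n)) (μ : ∀ n, Measure (Ω n)) (R : ℝ) :
    EReal :=
  ⨆ (c : ∀ n, C n) (_ : rate size c ≤ (R : EReal)),
    Filter.liminf
      (fun n : ℕ => (((n : ℝ)⁻¹ : ℝ) : EReal) * ENNReal.log (μ n (T n (c n))ᶜ)⁻¹)
      Filter.atTop

/-- `ε_C(R|μ;(k_n))`: infimum over multi-code sequences of rate at most `R` of the
limsup of the probabilities that all codes err. -/
def epsCMulti {Ω : ℕ → Type} [∀ n, MeasurableSpace (Ω n)] {C : ℕ → Type} (k : ℕ → ℕ)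
    (size : ∀ n, C n → ℝ) (T : ∀ n, C n → Set (Ω n)) (μ : ∀ n, Measure (Ω n)) (R : ℝ) :
    ℝ≥0∞ :=
  ⨅ (c : ∀ n, Fin (k n + 1) → C n) (_ : rateMulti k size c ≤ (R : EReal)),
    Filter.limsup (fun n => μ n (⋂ i, (T n (c n i))ᶜ)) Filter.atTop

/-- `ρ_C(R|μ;(k_n))`: supremum over multi-code sequences of rate at most `R` of
`liminf (1/n) log (1/μ_n(⋂_i (T_n(c_{i,n}))ᶜ))`. -/
def rhoCMulti {Ω : ℕ → Type} [∀ n, MeasurableSpace (Ω n)] {C : ℕ → Type} (k : ℕ → ℕ)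
    (size : ∀ n, C n → ℝ) (T : ∀ n, C n → Set (Ω n)) (μ : ∀ n, Measure (Ω n)) (R : ℝ) :
    EReal :=
  ⨆ (c : ∀ n, Fin (k n + 1) → C n) (_ : rateMulti k size c ≤ (R : EReal)),
    Filter.liminf
      (fun n : ℕ => (((n : ℝ)⁻¹ : ℝ) : EReal) * ENNReal.log (μ n (⋂ i, (T n (c n i))ᶜ))⁻¹)
      Filter.atTop

theorem aux_merge_s8 {Ω C : Type} (size : C → ℝ) (T : C → Set Ω)
    (hsub : ∀ c₁ c₂ : C, ∃ c : C, size c ≤ size c₁ + size c₂ ∧ T c = T c₁ ∪ T c₂) (M : ℝ) :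
    ∀ (k : ℕ) (c : Fin (k + 1) → C), (∀ i, size (c i) ≤ M) →
      ∃ d : C, size d ≤ ((k : ℝ) + 1) * M ∧ T d = ⋃ i, T (c i) := by
  intro k
  induction k with
  | zero =>
    intro c hc
    refine ⟨c 0, by simpa using hc 0, ?_⟩
    ext x
    simp
  | succ k ih =>
    intro c hc
    obtain ⟨d, hd, hT⟩ := ih (fun i => c i.succ) (fun i => hc _)
    obtain ⟨e, he, hTe⟩ := hsub (c 0) d
    refine ⟨e, ?_, ?_⟩
    · have := hc 0
      push_cast
      linarith
    · rw [hTe, hT]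
      ext x
      simp [Fin.exists_fin_succ]

theorem aux_multi {Ω : ℕ → Type} {C : ℕ → Type}
    (size : ∀ n, C n → ℝ) (hsize : ∀ n (c : C n), 1 ≤ size n c)
    (T : ∀ n, C n → Set (Ω n))
    (R s : ℝ) (k : ℕ → ℕ) (hk : ∀ n : ℕ, (k n : ℝ) ≤ (n : ℝ) ^ s)
    (hsub : ∀ n (c₁ c₂ : C n), ∃ c : C n,
      size n c ≤ size n c₁ + size n c₂ ∧ T n c = T n c₁ ∪ T n c₂)
    (c : ∀ n, Fin (k n + 1) → C n) (hc : rateMulti k size c ≤ (R : EReal)) :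
    ∃ d : ∀ n, C n, rate size d ≤ (R : EReal) ∧ ∀ n, (T n (d n))ᶜ = ⋂ i, (T n (c n i))ᶜ := by
  have hle : ∀ n i, size n (c n i) ≤ ⨆ i, size n (c n i) := fun n i =>
    le_ciSup (f := fun i => size n (c n i)) (Set.finite_range _).bddAbove i
  choose d hd hT using fun n => aux_merge_s8 (size n) (T n) (hsub n) _ (k n) (c n) (hle n)
  refine ⟨d, ?_, fun n => by rw [hT, Set.compl_iUnion]⟩
  have h0 : limsup (fun n : ℕ => (((n : ℝ)⁻¹ * Real.log ((k n : ℝ) + 1) : ℝ) : EReal)) atTop = 0 := by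
    have := (continuous_coe_real_ereal.tendsto 0).comp (aux_tendsto s k hk)
    exact this.limsup_eq
  calc rate size d ≤ limsup ((fun n : ℕ => (((n : ℝ)⁻¹ * Real.log ((k n : ℝ) + 1) : ℝ) : EReal)) +
        (fun n : ℕ => (((n : ℝ)⁻¹ * Real.log (⨆ i, size n (c n i)) : ℝ) : EReal))) atTop := by
        refine limsup_le_limsup (Eventually.of_forall fun n => ?_)
        simp only [Pi.add_apply]
        rw [← EReal.coe_add, EReal.coe_le_coe_iff, ← mul_add]
        have h1 : (1 : ℝ) ≤ ⨆ i, size n (c n i) := (hsize n _).trans (hle n 0)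
        rw [← Real.log_mul (by positivity) (by positivity)]
        refine mul_le_mul_of_nonneg_left ?_ (by positivity)
        exact Real.log_le_log (by linarith [hsize n (d n)]) (hd n)
    _ ≤ 0 + rateMulti k size c := by
        rw [← h0]
        exact EReal.limsup_add_le (Or.inl (by rw [h0]; simp)) (Or.inl (by rw [h0]; simp))
    _ ≤ R := by simpa using hc

theorem statement8
    (Ω : ℕ → Type) [∀ n, MeasurableSpace (Ω n)]
    (C : ℕ → Type) [∀ n, Nonempty (C n)]
    (size : ∀ n, C n → ℝ) (hsize : ∀ n (c : C n), 1 ≤ size n c)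
    (T : ∀ n, C n → Set (Ω n)) (hT : ∀ n (c : C n), MeasurableSet (T n c))
    (μ : ∀ n, Measure (Ω n)) (hμ : ∀ n, IsProbabilityMeasure (μ n))
    (R s : ℝ) (k : ℕ → ℕ) (hk : ∀ n : ℕ, (k n : ℝ) ≤ (n : ℝ) ^ s)
    (hsub : ∀ n (c₁ c₂ : C n), ∃ c : C n,
      size n c ≤ size n c₁ + size n c₂ ∧ T n c = T n c₁ ∪ T n c₂) :
    epsC size T μ R = epsCMulti k size T μ R ∧
    rhoC size T μ R = rhoCMulti k size T μ R := by
  have hconst : ∀ c : ∀ n, C n, rate size c ≤ (R : EReal) →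
      rateMulti k size (fun n _ => c n) ≤ (R : EReal) := by
    intro c hc
    simpa [rateMulti, rate] using hc
  constructor
  · apply le_antisymm
    · refine le_iInf₂ fun c hc => ?_
      obtain ⟨d, hd, hT'⟩ := aux_multi size hsize T R s k hk hsub c hc
      simp only [← hT']
      exact iInf₂_le d hd
    · refine le_iInf₂ fun c hc => ?_
      refine (iInf₂_le (fun n _ => c n) (hconst c hc)).trans ?_
      simp only [Set.iInter_const, le_refl]
  · apply le_antisymm
    · refine iSup₂_le fun c hc => ?_
      refine le_trans ?_ (le_iSup₂ (fun n _ => c n) (hconst c hc))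
      simp only [Set.iInter_const, le_refl]
    · refine iSup₂_le fun c hc => ?_
      obtain ⟨d, hd, hT'⟩ := aux_multi size hsize T R s k hk hsub c hc
      simp only [← hT']
      exact le_iSup₂ (f := fun (c : ∀ n, C n) (_ : rate size c ≤ (R : EReal)) => Filter.liminf
        (fun n : ℕ => (((n : ℝ)⁻¹ : ℝ) : EReal) * ENNReal.log (μ n (T n (c n))ᶜ)⁻¹)
        Filter.atTop) d hd

end
end

section
/- Let μ = (μ_n) be a sequence of probability measures, μ_n on a measurable space Ω_n, and let B_n ⊆ Ω_n be nonempty measurable sets. Then, as equalities in [0,+∞] (1/0 = +∞): liminf_n 1/μ_n(B_n) = min{ G_l(ν‖μ) : ν = (ν_n) a sequence of probability measures on the Ω_n with lim_n ν_n(B_n) = 1 }, and limsup_n 1/μ_n(B_n) = min{ G_u(ν‖μ) : ν = (ν_n) a sequence of probability measures on the Ω_n with lim_n ν_n(B_n) = 1 }; in both formulas the minimum is attained. -/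
open MeasureTheory Filter Topology ProbabilityTheory
open scoped ENNReal

noncomputable section

/-- `G_l(ν‖μ) = liminf_n G(ν_n‖μ_n)`. -/
def Gl {Ω : ℕ → Type} [∀ n, MeasurableSpace (Ω n)]
    (ν μ : ∀ n, Measure (Ω n)) : ℝ≥0∞ :=
  Filter.liminf (fun n => Gdiv (ν n) (μ n)) Filter.atTop

lemma gdiv_cond {Ω : Type} [MeasurableSpace Ω] (μ : Measure Ω) [IsProbabilityMeasure μ]
    (B : Set Ω) (hB : MeasurableSet B) (h0 : μ B ≠ 0) :
    Gdiv (ProbabilityTheory.cond μ B) μ = (μ B)⁻¹ := by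
  have hac : ProbabilityTheory.cond μ B ≪ μ := ProbabilityTheory.cond_absolutelyContinuous
  have : IsProbabilityMeasure (ProbabilityTheory.cond μ B) :=
    ProbabilityTheory.cond_isProbabilityMeasure h0
  have hw : ProbabilityTheory.cond μ B = μ.withDensity (B.indicator fun _ => (μ B)⁻¹) := by
    rw [withDensity_indicator hB, withDensity_const]; rfl
  have h1 : (ProbabilityTheory.cond μ B).rnDeriv μ =ᵐ[μ] B.indicator fun _ => (μ B)⁻¹ := by
    rw [hw]
    exact Measure.rnDeriv_withDensity μ (measurable_const.indicator hB)
  have hmem : ∀ᵐ x ∂(ProbabilityTheory.cond μ B), x ∈ B :=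
    ProbabilityTheory.ae_cond_mem hB
  rw [Gdiv, if_pos hac]
  have h2 : (ProbabilityTheory.cond μ B).rnDeriv μ =ᵐ[ProbabilityTheory.cond μ B]
      fun _ => (μ B)⁻¹ := by
    filter_upwards [hac.ae_le h1, hmem] with x hx hxB
    rw [hx, Set.indicator_of_mem hxB]
  rw [lintegral_congr_ae h2]
  simp

lemma gdiv_dirac {Ω : Type} [MeasurableSpace Ω] (μ : Measure Ω)
    (B : Set Ω) (hB : MeasurableSet B) (h0 : μ B = 0) (x : Ω) (hx : x ∈ B) :
    Gdiv (Measure.dirac x) μ = (μ B)⁻¹ := by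
  rw [Gdiv, if_neg, h0, ENNReal.inv_zero]
  intro h
  have := h h0
  rw [Measure.dirac_apply' x hB] at this
  simp [hx] at this

lemma exists_opt {Ω : Type} [MeasurableSpace Ω] (μ : Measure Ω) [IsProbabilityMeasure μ]
    (B : Set Ω) (hB : MeasurableSet B) (hne : B.Nonempty) :
    ∃ ν : Measure Ω, IsProbabilityMeasure ν ∧ ν B = 1 ∧ Gdiv ν μ = (μ B)⁻¹ := by
  by_cases h0 : μ B = 0
  · obtain ⟨x, hx⟩ := hne
    refine ⟨Measure.dirac x, inferInstance, ?_, gdiv_dirac μ B hB h0 x hx⟩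
    rw [Measure.dirac_apply' x hB]
    simp [hx]
  · refine ⟨ProbabilityTheory.cond μ B, ProbabilityTheory.cond_isProbabilityMeasure h0, ?_,
      gdiv_cond μ B hB h0⟩
    exact ProbabilityTheory.cond_apply_self h0 (measure_ne_top _ _)

lemma gdiv_lower {Ω : Type} [MeasurableSpace Ω] (μ ν : Measure Ω) [IsProbabilityMeasure μ]
    [IsProbabilityMeasure ν] (B : Set Ω) (hB : MeasurableSet B) (hν : ν B ≠ 0) :
    ν B ^ 2 * (μ B)⁻¹ ≤ Gdiv ν μ := by
  by_cases hac : ν ≪ μ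
  swap
  · rw [Gdiv, if_neg hac]; exact le_top
  rw [Gdiv, if_pos hac]
  have h0 : μ B ≠ 0 := fun h => hν (hac h)
  have hm := Measure.measurable_rnDeriv ν μ
  have hcs := ENNReal.lintegral_mul_le_Lp_mul_Lq (μ.restrict B) Real.HolderConjugate.two_two
    (f := ν.rnDeriv μ) (g := fun _ => 1) hm.aemeasurable aemeasurable_const
  have e1 : ∫⁻ a in B, (ν.rnDeriv μ * (fun _ => 1 : Ω → ℝ≥0∞)) a ∂μ = ν B := by
    simpa using Measure.setLIntegral_rnDeriv hac B
  have e2 : ∫⁻ a in B, ν.rnDeriv μ a ^ (2 : ℝ) ∂μ ≤ ∫⁻ x, ν.rnDeriv μ x ∂ν := by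
    rw [← lintegral_rnDeriv_mul hac hm.aemeasurable]
    refine (setLIntegral_le_lintegral _ _).trans (le_of_eq ?_)
    congr 1
    ext x
    rw [ENNReal.rpow_two, sq]
  rw [e1] at hcs
  have h3 : ν B ^ 2 ≤ (∫⁻ a in B, ν.rnDeriv μ a ^ (2 : ℝ) ∂μ) * μ B := by
    refine (pow_le_pow_left' hcs 2).trans (le_of_eq ?_)
    rw [mul_pow, ← ENNReal.rpow_two, ← ENNReal.rpow_two, ← ENNReal.rpow_mul, ← ENNReal.rpow_mul]
    simp
  rw [← div_eq_mul_inv]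
  exact ENNReal.div_le_of_le_mul (h3.trans (by gcongr))

theorem statement12
    (Ω : ℕ → Type) [∀ n, MeasurableSpace (Ω n)]
    (μ : ∀ n, Measure (Ω n)) (hμ : ∀ n, IsProbabilityMeasure (μ n))
    (B : ∀ n, Set (Ω n)) (hBne : ∀ n, (B n).Nonempty) (hBmeas : ∀ n, MeasurableSet (B n)) :
    (∃ ν : ∀ n, Measure (Ω n), (∀ n, IsProbabilityMeasure (ν n)) ∧
      Filter.Tendsto (fun n => ν n (B n)) Filter.atTop (nhds 1) ∧
      Filter.liminf (fun n => (μ n (B n))⁻¹) Filter.atTop = Gl ν μ ∧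
      ∀ ν' : ∀ n, Measure (Ω n), (∀ n, IsProbabilityMeasure (ν' n)) →
        Filter.Tendsto (fun n => ν' n (B n)) Filter.atTop (nhds 1) → Gl ν μ ≤ Gl ν' μ) ∧
    (∃ ν : ∀ n, Measure (Ω n), (∀ n, IsProbabilityMeasure (ν n)) ∧
      Filter.Tendsto (fun n => ν n (B n)) Filter.atTop (nhds 1) ∧
      Filter.limsup (fun n => (μ n (B n))⁻¹) Filter.atTop = Gu ν μ ∧
      ∀ ν' : ∀ n, Measure (Ω n), (∀ n, IsProbabilityMeasure (ν' n)) →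
        Filter.Tendsto (fun n => ν' n (B n)) Filter.atTop (nhds 1) → Gu ν μ ≤ Gu ν' μ) := by
  choose ν hp h1 hG using fun n => exists_opt (μ n) (B n) (hBmeas n) (hBne n)
  have hfun : (fun n => Gdiv (ν n) (μ n)) = fun n => (μ n (B n))⁻¹ := funext hG
  have ht : Filter.Tendsto (fun n => ν n (B n)) Filter.atTop (nhds 1) := by
    simp only [h1]; exact tendsto_const_nhds
  have key : ∀ ν' : ∀ n, Measure (Ω n), (∀ n, IsProbabilityMeasure (ν' n)) →
      Filter.Tendsto (fun n => ν' n (B n)) Filter.atTop (nhds 1) →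
      Filter.Tendsto (fun n => ν' n (B n) ^ 2) Filter.atTop (nhds 1) ∧
      ∀ᶠ n in Filter.atTop,
        ((fun n => ν' n (B n) ^ 2) * fun n => (μ n (B n))⁻¹) n ≤ Gdiv (ν' n) (μ n) := by
    intro ν' hp' ht'
    refine ⟨by simpa using ENNReal.Tendsto.pow (n := 2) ht', ?_⟩
    filter_upwards [ht'.eventually_ne one_ne_zero] with n hn
    have := hp' n
    exact gdiv_lower (μ n) (ν' n) (B n) (hBmeas n) hn
  refine ⟨⟨ν, hp, ht, ?_, ?_⟩, ⟨ν, hp, ht, ?_, ?_⟩⟩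
  · rw [Gl, hfun]
  · intro ν' hp' ht'
    obtain ⟨ha, hb⟩ := key ν' hp' ht'
    rw [Gl, hfun, Gl]
    have := ENNReal.le_liminf_mul (f := Filter.atTop) (u := fun n => ν' n (B n) ^ 2)
      (v := fun n => (μ n (B n))⁻¹)
    rw [ha.liminf_eq, one_mul] at this
    exact this.trans (Filter.liminf_le_liminf hb)
  · rw [Gu, hfun]
  · intro ν' hp' ht'
    obtain ⟨ha, hb⟩ := key ν' hp' ht'
    rw [Gu, hfun, Gu]
    have := ENNReal.le_limsup_mul (f := Filter.atTop) (v := fun n => ν' n (B n) ^ 2)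
      (u := fun n => (μ n (B n))⁻¹)
    rw [ha.liminf_eq, mul_one, mul_comm] at this
    exact this.trans (Filter.limsup_le_limsup hb)


end
end

section
/- For a ∈ [0,1] and a probability measure ν on Ω_n, define R_n^a(ν) = inf{ (1/n) log ‖c‖ : c ∈ C_n, ν((T_n(c))ᶜ) ≤ 1 − a } (inf ∅ = +∞). Let (a_n) be a sequence of numbers in [0,1] with lim_n a_n = 0, let u = (u_n) and v = (v_n) be sources, let I be a set of positive integers, and define the source w = (w_n) by w_n = v_n if n ∈ I and w_n = u_n if n ∉ I. Then R*_C(w) ≥ min{ R*_C(u), liminf_{n→∞, n∈I} R_n^{a_n}(v_n) }, where the liminf is taken along the filter of cofinite subsets of I (equal to +∞ if I is finite). -/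
open MeasureTheory Filter Topology
open scoped ENNReal

noncomputable section

/-- `R*_C(ν)`: infimum of rates of code sequences whose error probability under `ν`
has liminf smaller than one. -/
def RStarC {Ω : ℕ → Type} [∀ n, MeasurableSpace (Ω n)] {C : ℕ → Type}
    (size : ∀ n, C n → ℝ) (T : ∀ n, C n → Set (Ω n)) (ν : ∀ n, Measure (Ω n)) : EReal :=
  ⨅ (c : ∀ n, C n)
    (_ : Filter.liminf (fun n => ν n (T n (c n))ᶜ) Filter.atTop < 1),
    rate size c

/-- `R_n^a(ν) = inf { (1/n) log ‖c‖ : c ∈ C_n, ν((T_n(c))ᶜ) ≤ 1 − a }`. -/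
def Rna {Ω : ℕ → Type} [∀ n, MeasurableSpace (Ω n)] {C : ℕ → Type}
    (size : ∀ n, C n → ℝ) (T : ∀ n, C n → Set (Ω n)) (a : ℝ) (n : ℕ) (ν : Measure (Ω n)) :
    EReal :=
  ⨅ (c : C n) (_ : ν (T n c)ᶜ ≤ ENNReal.ofReal (1 - a)),
    (((n : ℝ)⁻¹ * Real.log (size n c) : ℝ) : EReal)

theorem statement14
    (Ω : ℕ → Type) [∀ n, MeasurableSpace (Ω n)]
    (C : ℕ → Type) [∀ n, Nonempty (C n)]
    (size : ∀ n, C n → ℝ) (hsize : ∀ n (c : C n), 1 ≤ size n c)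
    (T : ∀ n, C n → Set (Ω n)) (hT : ∀ n (c : C n), MeasurableSet (T n c))
    (μ : ∀ n, Measure (Ω n)) (hμ : ∀ n, IsProbabilityMeasure (μ n))
    (a : ℕ → ℝ) (ha01 : ∀ n, a n ∈ Set.Icc (0 : ℝ) 1)
    (ha : Filter.Tendsto a Filter.atTop (nhds 0))
    (u v : ∀ n, Measure (Ω n))
    (hu : ∀ n, IsProbabilityMeasure (u n)) (hv : ∀ n, IsProbabilityMeasure (v n))
    (I : Set ℕ) (w : ∀ n, Measure (Ω n))
    (hwI : ∀ n ∈ I, w n = v n) (hwI' : ∀ n, n ∉ I → w n = u n) :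
    min (RStarC size T u)
        (Filter.liminf (fun n => Rna size T (a n) n (v n))
          (Filter.atTop ⊓ Filter.principal I)) ≤ RStarC size T w := by
  unfold RStarC
  refine le_iInf₂ fun c hc => ?_
  obtain ⟨b, hb1, hb2⟩ := exists_between hc
  have hfr : ∃ᶠ n in atTop, w n (T n (c n))ᶜ < b := frequently_lt_of_liminf_lt (by isBoundedDefault) hb1
  by_cases hI : ∃ᶠ n in atTop, w n (T n (c n))ᶜ < b ∧ n ∈ I
  · refine (min_le_right _ _).trans ?_
    by_contra hlt
    obtain ⟨r, hr1, hr2⟩ := exists_between (not_le.mp hlt)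
    have h1 : ∀ᶠ n : ℕ in atTop, (((n : ℝ)⁻¹ * Real.log (size n (c n)) : ℝ) : EReal) < r :=
      eventually_lt_of_limsup_lt hr1
    have h2 : ∀ᶠ n in atTop ⊓ 𝓟 I, r < Rna size T (a n) n (v n) :=
      eventually_lt_of_lt_liminf hr2
    rw [eventually_inf_principal] at h2
    have h3 : Tendsto (fun n => ENNReal.ofReal (1 - a n)) atTop (𝓝 1) := by
      have := ENNReal.tendsto_ofReal (tendsto_const_nhds (x := (1 : ℝ)) |>.sub ha)
      simpa using this
    have h4 := h3.eventually (lt_mem_nhds hb2)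
    obtain ⟨n, ⟨⟨hn1, hnI⟩, hn2⟩, hn3, hn4⟩ := ((hI.and_eventually h1).and_eventually (h2.and h4)).exists
    rw [hwI n hnI] at hn1
    have h5 : Rna size T (a n) n (v n) ≤ (((n : ℝ)⁻¹ * Real.log (size n (c n)) : ℝ) : EReal) :=
      iInf₂_le (c n) (hn1.trans hn4).le
    exact absurd (h5.trans_lt hn2) (not_lt.mpr (hn3 hnI).le)
  · refine (min_le_left _ _).trans (iInf₂_le c ?_)
    rw [not_frequently] at hI
    have h1 : ∃ᶠ n in atTop, u n (T n (c n))ᶜ ≤ b := by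
      refine (hfr.and_eventually hI).mono fun n hn => ?_
      have hnI : n ∉ I := fun h => hn.2 ⟨hn.1, h⟩
      rw [← hwI' n hnI]
      exact hn.1.le
    exact (liminf_le_of_frequently_le' h1).trans_lt hb2

end
end

section
/- Let μ be a probability measure on a measurable space Ω and let B ⊆ Ω be a nonempty measurable set. Then 1/μ(B) = min{ G(ν‖μ) : ν a probability measure on Ω with ν(B) = 1 }, as an equality in [0,+∞] with 1/0 = +∞, and the minimum is attained (when μ(B) > 0, by the conditional measure μ(·|B)). -/
open MeasureTheory Filter Topology ProbabilityTheory
open scoped ENNReal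

noncomputable section

theorem amgm_aux (c : ℝ≥0∞) (hc : c ≠ ⊤) (f : ℝ≥0∞) : 2 * c * f ≤ f * f + c * c := by
  by_cases hf : f = ⊤
  · simp [hf]
  lift f to NNReal using hf
  lift c to NNReal using hc
  norm_cast
  rw [← NNReal.coe_le_coe]
  push_cast
  nlinarith [sq_nonneg ((f : ℝ) - c)]

theorem lower_aux {Ω : Type} [MeasurableSpace Ω] (μ ν : Measure Ω) [IsProbabilityMeasure μ]
    [IsProbabilityMeasure ν] (B : Set Ω) (hB : MeasurableSet B) (h : ν B = 1) :
    (μ B)⁻¹ ≤ Gdiv ν μ := by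
  unfold Gdiv
  split_ifs with hac
  swap
  · exact le_top
  have h0 : μ B ≠ 0 := fun h0 => by
    have := hac h0
    simp [h] at this
  have hT : (μ B)⁻¹ ≠ ⊤ := ENNReal.inv_ne_top.2 h0
  have hm : Measurable (ν.rnDeriv μ) := Measure.measurable_rnDeriv _ _
  have e1 : ∫⁻ x, ν.rnDeriv μ x ∂ν = ∫⁻ x, ν.rnDeriv μ x * ν.rnDeriv μ x ∂μ :=
    (lintegral_rnDeriv_mul hac hm.aemeasurable).symm
  have e2 : ∫⁻ x in B, ν.rnDeriv μ x ∂μ = 1 := by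
    rw [Measure.setLIntegral_rnDeriv hac, h]
  rw [e1]
  have e3 : ∫⁻ x in B, 2 * (μ B)⁻¹ * ν.rnDeriv μ x ∂μ ≤
      ∫⁻ x in B, (ν.rnDeriv μ x * ν.rnDeriv μ x + (μ B)⁻¹ * (μ B)⁻¹) ∂μ :=
    lintegral_mono fun x => amgm_aux _ hT _
  rw [lintegral_const_mul _ hm, e2, lintegral_add_right _ measurable_const, setLIntegral_const,
    mul_assoc (μ B)⁻¹, ENNReal.inv_mul_cancel h0 (measure_ne_top _ _), mul_one, mul_one,
    two_mul] at e3
  exact ((ENNReal.add_le_add_iff_right hT).1 e3).trans (setLIntegral_le_lintegral _ _)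

theorem cond_aux {Ω : Type} [MeasurableSpace Ω] (μ : Measure Ω) [IsProbabilityMeasure μ]
    (B : Set Ω) (hB : MeasurableSet B) (h0 : μ B ≠ 0) :
    Gdiv (μ[|B]) μ = (μ B)⁻¹ := by
  have hT : (μ B)⁻¹ ≠ ⊤ := ENNReal.inv_ne_top.2 h0
  have e : μ[|B] = μ.withDensity (B.indicator fun _ => (μ B)⁻¹) := by
    rw [withDensity_indicator hB, withDensity_const]
    rfl
  have hac : μ[|B] ≪ μ := by
    rw [e]
    exact withDensity_absolutelyContinuous _ _
  have hr : (μ[|B]).rnDeriv μ =ᵐ[μ] B.indicator fun _ => (μ B)⁻¹ := by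
    rw [e]
    exact Measure.rnDeriv_withDensity _ (measurable_const.indicator hB)
  unfold Gdiv
  rw [if_pos hac, lintegral_congr_ae (hac.ae_le hr), lintegral_indicator hB, setLIntegral_const,
    cond_apply_self h0 (measure_ne_top _ _), mul_one]

theorem statement15
    (Ω : Type) [MeasurableSpace Ω] (μ : Measure Ω) (hμ : IsProbabilityMeasure μ)
    (B : Set Ω) (hBne : B.Nonempty) (hB : MeasurableSet B) :
    ∃ ν : Measure Ω, IsProbabilityMeasure ν ∧ ν B = 1 ∧
      Gdiv ν μ = (μ B)⁻¹ ∧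
      (∀ ν' : Measure Ω, IsProbabilityMeasure ν' → ν' B = 1 → Gdiv ν μ ≤ Gdiv ν' μ) ∧
      (μ B ≠ 0 → ν = μ[|B]) := by
  by_cases h0 : μ B = 0
  · obtain ⟨b, hb⟩ := hBne
    have hd : Measure.dirac b B = 1 := by simp [Measure.dirac_apply' _ hB, hb]
    have hG : Gdiv (Measure.dirac b) μ = (μ B)⁻¹ := by
      unfold Gdiv
      rw [if_neg, h0, ENNReal.inv_zero]
      intro hac
      have := hac h0
      simp [hd] at this
    refine ⟨Measure.dirac b, inferInstance, hd, hG, ?_, fun h => absurd h0 h⟩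
    intro ν' hν' h
    rw [hG]
    exact lower_aux μ ν' B hB h
  · have hG := cond_aux μ B hB h0
    refine ⟨μ[|B], cond_isProbabilityMeasure h0, cond_apply_self h0 (measure_ne_top _ _), hG,
      ?_, fun _ => rfl⟩
    intro ν' hν' h
    rw [hG]
    exact lower_aux μ ν' B hB h

end
end
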